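/- arXiv:2404.09070 — 3 statements merged into one kernel-verified Lean document; each statement's English description precedes it below -/
import Mathlib

section
/- The Jacobson radical of the group algebra ℤ₂[A₄] equals the two-sided ideal of ℤ₂[A₄] generated by the image of the Jacobson radical of ℤ₂[V₄] under the algebra homomorphism ℤ₂[V₄] → ℤ₂[A₄] induced by the inclusion V₄ ≤ A₄. -/
/-- `A₄`, the alternating group on 4 letters. -/
abbrev A4 : Type := alternatingGroup (Fin 4)

/-- `a = (12)(34)` as an element of `A₄`. -/
def aP : A4 := ⟨Equiv.swap 0 1 * Equiv.swap 2 3, Equiv.Perm.mem_alternatingGroup.mpr (by decide)⟩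
/-- `b = (13)(24)` as an element of `A₄`. -/
def bP : A4 := ⟨Equiv.swap 0 2 * Equiv.swap 1 3, Equiv.Perm.mem_alternatingGroup.mpr (by decide)⟩
/-- `c = (14)(23)` as an element of `A₄`. -/
def cP : A4 := ⟨Equiv.swap 0 3 * Equiv.swap 1 2, Equiv.Perm.mem_alternatingGroup.mpr (by decide)⟩

/-- The Klein four subgroup `V₄ = {1, (12)(34), (13)(24), (14)(23)}` of `A₄`. -/
def V4 : Subgroup A4 where
  carrier := {1, aP, bP, cP}
  one_mem' := Or.inl rfl
  mul_mem' := by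
    intro a b ha hb
    simp only [Set.mem_insert_iff, Set.mem_singleton_iff] at *
    revert ha hb; revert a b
    decide
  inv_mem' := by
    intro a ha
    simp only [Set.mem_insert_iff, Set.mem_singleton_iff] at *
    revert ha; revert a
    decide

/-!
Let `R` be a commutative ring whose Jacobson radical contains a prime `p`, and let `N` be a normal
`p`-subgroup of a finite group `G` with index prime to `p`. A simple `R[G]`-module is killed by
`J(R)` (Nakayama), hence by `p`, so the `p`-group `N` has a nonzero fixed vector in it; as `N` is
normal, it acts trivially. Thus `J(R)` and all `n - 1`, `n ∈ N`, lie in `J(R[G])`. Conversely,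
`R[G]` maps onto every `(R/m)[G/N]` with `m` maximal, which is semisimple by Maschke's theorem, so
these elements generate `J(R[G])`. The same description of `J(R[N])` involves the same generators.
-/

open MonoidAlgebra

section Jacobson

variable {R A : Type*} [CommRing R] [Ring A] [Algebra R A]

theorem mem_jacobson_of_smul_quotient_eq_zero {a : A}
    (h : ∀ (m : Ideal A) [IsSimpleModule A (A ⧸ m)] (v : A ⧸ m), a • v = 0) :
    a ∈ Ring.jacobson A := by
  rw [Ring.jacobson_eq_sInf_isMaximal, Submodule.mem_sInf]
  intro (m : Ideal A) (hm : m.IsMaximal)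
  have : IsSimpleModule A (A ⧸ m) := isSimpleModule_iff_isCoatom.2 hm.out
  simpa [← Submodule.Quotient.mk_smul, Submodule.Quotient.mk_eq_zero] using
    h m (Submodule.Quotient.mk 1)

variable (A) in
theorem smul_eq_zero_of_mem_jacobson [Module.Finite R A] {M : Type*} [AddCommGroup M] [Module R M]
    [Module A M] [IsScalarTower R A M] [IsSimpleModule A M] {r : R} (hr : r ∈ Ring.jacobson R)
    (v : M) : r • v = 0 := by
  have : Module.Finite R M := Module.Finite.trans A M
  have : Nontrivial M := IsSimpleModule.nontrivial A M
  let f : M →ₗ[A] M := Module.toModuleEnd A M r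
  -- Schur leaves `f` bijective or zero, and Nakayama's lemma excludes surjectivity.
  rcases f.bijective_or_eq_zero with hf | hf
  · have hlt := Submodule.jacobson_smul_lt_top (⊤ : Submodule R M)
    refine absurd (eq_top_iff.2 fun w _ => ?_) hlt.ne
    obtain ⟨u, rfl⟩ := hf.surjective w
    exact Submodule.smul_mem_smul hr trivial
  · exact LinearMap.congr_fun hf v

theorem algebraMap_mem_jacobson [Module.Finite R A] {r : R} (hr : r ∈ Ring.jacobson R) :
    algebraMap R A r ∈ Ring.jacobson A := by
  refine mem_jacobson_of_smul_quotient_eq_zero fun m _ v => ?_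
  rw [algebraMap_smul]
  exact smul_eq_zero_of_mem_jacobson A hr v

theorem isUnit_natCast_of_coprime_of_mem_jacobson {p n : ℕ} (hp : (p : R) ∈ Ring.jacobson R)
    (hpn : p.Coprime n) : IsUnit (n : R) := by
  rw [← Ideal.jacobson_bot] at hp
  obtain ⟨a, b, hab⟩ : IsCoprime (p : R) (n : R) := hpn.cast
  have hbn : IsUnit (b * n) := by
    refine Ideal.isUnit_of_sub_one_mem_jacobson_bot _ ?_
    rw [← hab, sub_add_cancel_right]
    exact neg_mem (Ideal.mul_mem_left _ a hp)
  exact isUnit_of_mul_isUnit_right hbn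

end Jacobson

theorem exists_ne_zero_forall_smul_eq_of_isPGroup {p : ℕ} [Fact p.Prime] {P M : Type*} [Group P]
    [Finite P] (hP : IsPGroup p P) [AddCommGroup M] [DistribMulAction P M] [Nontrivial M]
    (hM : ∀ v : M, p • v = 0) : ∃ v : M, v ≠ 0 ∧ ∀ g : P, g • v = v := by
  obtain ⟨v, hv⟩ := exists_ne (0 : M)
  -- The orbit of `v` spans a finite group of order divisible by `p`, on which `P` acts.
  let W : AddSubgroup M := AddSubgroup.closure (MulAction.orbit P v)
  have hW (g : P) {w : M} (hw : w ∈ W) : g • w ∈ W := by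
    suffices W ≤ W.comap (DistribSMul.toAddMonoidHom M g) from this hw
    refine (AddSubgroup.closure_le _).2 ?_
    rintro _ ⟨h, rfl⟩
    exact AddSubgroup.subset_closure ⟨g * h, mul_smul g h v⟩
  let S : SubMulAction P M := ⟨W, fun g _ hw => hW g hw⟩
  have : Finite S := by
    have : Finite (MulAction.orbit P v) := Set.finite_range _
    have : AddGroup.FG W := AddGroup.closure_finite_fg _
    refine AddCommGroup.finite_of_fg_isAddTorsion W fun w => ?_
    exact isOfFinAddOrder_iff_nsmul_eq_zero.2 ⟨p, (Fact.out : p.Prime).pos, Subtype.ext (hM w)⟩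
  have hvW : v ∈ W := AddSubgroup.subset_closure (MulAction.mem_orbit_self v)
  have hp : p ∣ Nat.card S := by
    rw [← addOrderOf_eq_prime (hM v) hv, ← AddSubgroup.addOrderOf_mk v hvW]
    exact addOrderOf_dvd_natCard _
  obtain ⟨w, hw, hne⟩ := hP.exists_fixed_point_of_prime_dvd_card_of_fixed_point S hp
    (a := ⟨0, W.zero_mem⟩) fun g => Subtype.ext (smul_zero g)
  exact ⟨w, fun h => hne (Subtype.ext h.symm), fun g => congrArg Subtype.val (hw g)⟩

section GroupAlgebra

variable {p : ℕ} {R G : Type*} [CommRing R] [Group G] {N : Subgroup G}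

variable (R N) in
/-- The vectors of an `R[G]`-module fixed by a normal subgroup `N` of `G`; normality makes them
an `R[G]`-submodule. -/
def fixedSubmodule [N.Normal] (M : Type*) [AddCommGroup M] [Module R[G] M] :
    Submodule R[G] M where
  carrier := {v | ∀ n ∈ N, of R G n • v = v}
  zero_mem' := fun n _ => smul_zero _
  add_mem' := fun {u v} hu hv n hn => by rw [smul_add, hu n hn, hv n hn]
  smul_mem' := by
    intro c v hv n hn
    induction c using MonoidAlgebra.induction_linear with
    | zero => simp
    | add x y hx hy => rw [add_smul, smul_add, hx, hy]
    | single g r =>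
      have hconj : of R G n * single g r = single g r * of R G (g⁻¹ * n * g) := by
        simp [mul_assoc]
      have hmem : g⁻¹ * n * g ∈ N := by simpa using ‹N.Normal›.conj_mem n hn g⁻¹
      rw [smul_smul, hconj, mul_smul, hv _ hmem]

theorem fixedSubmodule_eq_top [Fact p.Prime] [N.Normal] [Finite N] (hN : IsPGroup p N) {M : Type*}
    [AddCommGroup M] [Module R[G] M] [IsSimpleModule R[G] M] (hM : ∀ v : M, p • v = 0) :
    fixedSubmodule R N M = ⊤ := by
  have : Nontrivial M := IsSimpleModule.nontrivial R[G] M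
  let := DistribMulAction.compHom M ((of R G).comp N.subtype)
  obtain ⟨v, hv, hfix⟩ := exists_ne_zero_forall_smul_eq_of_isPGroup hN hM
  have hmem : v ∈ fixedSubmodule R N M := fun n hn => hfix ⟨n, hn⟩
  exact (eq_bot_or_eq_top _).resolve_left ((Submodule.ne_bot_iff _).2 ⟨v, hmem, hv⟩)

theorem of_sub_one_mem_jacobson [Fact p.Prime] [Finite G] [N.Normal]
    (hp : (p : R) ∈ Ring.jacobson R) (hN : IsPGroup p N) {n : G} (hn : n ∈ N) :
    of R G n - 1 ∈ Ring.jacobson R[G] := by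
  refine mem_jacobson_of_smul_quotient_eq_zero fun m _ v => ?_
  have hp_smul (w : R[G] ⧸ m) : p • w = 0 := by
    rw [← Nat.cast_smul_eq_nsmul R]
    exact smul_eq_zero_of_mem_jacobson R[G] hp w
  have hv : v ∈ fixedSubmodule R N (R[G] ⧸ m) := by
    rw [fixedSubmodule_eq_top hN hp_smul]
    trivial
  rw [sub_smul, one_smul, hv n hn, sub_self]

theorem coeff_mem_jacobson_of_isUnit_card [Finite G] (hG : IsUnit (Nat.card G : R)) {x : R[G]}
    (hx : x ∈ Ring.jacobson R[G]) (g : G) : x.coeff g ∈ Ring.jacobson R := by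
  rw [Ring.jacobson_eq_sInf_isMaximal, Submodule.mem_sInf]
  intro (m : Ideal R) (hm : m.IsMaximal)
  let := Ideal.Quotient.field m
  have : NeZero (Nat.card G : R ⧸ m) :=
    ⟨by simpa using (hG.map (Ideal.Quotient.mk m)).ne_zero⟩
  let f : R[G] →+* (R ⧸ m)[G] := mapRingHom G (Ideal.Quotient.mk m)
  have : RingHomSurjective f := ⟨map_surjective _ Ideal.Quotient.mk_surjective⟩
  have hfx : f x = 0 := by
    have := Ring.le_comap_jacobson f hx
    rwa [IsSemisimpleRing.jacobson_eq_bot] at this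
  rw [← Ideal.Quotient.eq_zero_iff_mem, ← coeff_mapRingHom]
  exact congrArg (fun y => y.coeff g) hfx

theorem coeff_mapDomain_mk_mem_jacobson_of_isUnit_index [Finite G] [N.Normal]
    (hN : IsUnit (N.index : R)) {x : R[G]} (hx : x ∈ Ring.jacobson R[G]) (q : G ⧸ N) :
    (mapDomain (QuotientGroup.mk : G → G ⧸ N) x).coeff q ∈ Ring.jacobson R := by
  have : RingHomSurjective (mapDomainRingHom R (QuotientGroup.mk' N)) := ⟨fun y => by
    obtain ⟨z, hz⟩ := Finsupp.mapDomain_surjective (QuotientGroup.mk'_surjective N) y.coeff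
    exact ⟨ofCoeff z, congrArg ofCoeff hz⟩⟩
  exact coeff_mem_jacobson_of_isUnit_card hN
    (Ring.le_comap_jacobson (mapDomainRingHom R (QuotientGroup.mk' N)) hx) q

theorem mem_of_coeff_mapDomain_mk_mem {I : Ideal R} {L : Ideal R[G]}
    (hI : ∀ r ∈ I, algebraMap R R[G] r ∈ L) (hN : ∀ n ∈ N, of R G n - 1 ∈ L) {x : R[G]}
    (hx : ∀ q, (mapDomain (QuotientGroup.mk : G → G ⧸ N) x).coeff q ∈ I) : x ∈ L := by
  have hlift (y : R[G ⧸ N]) (hy : ∀ q, y.coeff q ∈ I) : mapDomain Quotient.out y ∈ L := by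
    rw [← sum_coeff_single y, mapDomain_sum]
    refine L.sum_mem fun q _ => ?_
    simpa using L.mul_mem_left (of R G q.out) (hI _ (hy q))
  have hdiff (y : R[G]) :
      y - mapDomain Quotient.out (mapDomain (QuotientGroup.mk : G → G ⧸ N) y) ∈ L := by
    induction y using MonoidAlgebra.induction_linear with
    | zero => simp
    | add y z hy hz => simpa only [mapDomain_add, add_sub_add_comm] using L.add_mem hy hz
    | single g r =>
      have hn : g⁻¹ * (QuotientGroup.mk g : G ⧸ N).out ∈ N :=
        QuotientGroup.eq.1 (QuotientGroup.out_eq' _).symm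
      rw [← neg_mem_iff]
      simpa [mul_sub] using L.mul_mem_left (single g r) (hN _ hn)
  simpa using L.add_mem (hdiff x) (hlift _ hx)

theorem jacobson_monoidAlgebra_eq_span [Fact p.Prime] [Finite G] [N.Normal]
    (hp : (p : R) ∈ Ring.jacobson R) (hN : IsPGroup p N) (hindex : ¬ p ∣ N.index) :
    Ring.jacobson R[G] =
      Ideal.span (algebraMap R R[G] '' Ring.jacobson R ∪ (of R G · - 1) '' N) := by
  apply le_antisymm
  · intro x hx
    have hunit : IsUnit (N.index : R) := isUnit_natCast_of_coprime_of_mem_jacobson hp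
      ((Fact.out : p.Prime).coprime_iff_not_dvd.2 hindex)
    exact mem_of_coeff_mapDomain_mk_mem
      (fun r hr => Ideal.subset_span (.inl ⟨r, hr, rfl⟩))
      (fun n hn => Ideal.subset_span (.inr ⟨n, hn, rfl⟩))
      (coeff_mapDomain_mk_mem_jacobson_of_isUnit_index hunit hx)
  · rw [Ideal.span_le]
    rintro _ (⟨r, hr, rfl⟩ | ⟨n, hn, rfl⟩)
    · exact algebraMap_mem_jacobson hr
    · exact of_sub_one_mem_jacobson hp hN hn

theorem jacobson_le_comap_mapDomainRingHom_subtype [Fact p.Prime] [Finite G] [N.Normal]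
    (hp : (p : R) ∈ Ring.jacobson R) (hN : IsPGroup p N) :
    Ring.jacobson R[N] ≤ (Ring.jacobson R[G]).comap (mapDomainRingHom R N.subtype) := by
  rw [jacobson_monoidAlgebra_eq_span hp (hN.to_subgroup ⊤)
    (by simpa using (Fact.out : p.Prime).ne_one), Ideal.span_le]
  rintro _ (⟨r, hr, rfl⟩ | ⟨n, -, rfl⟩)
  · simpa using algebraMap_mem_jacobson (A := R[G]) hr
  · rw [SetLike.mem_coe, Ideal.mem_comap, map_sub, map_one]
    simpa using of_sub_one_mem_jacobson hp hN n.2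

end GroupAlgebra

theorem jacobson_radical_Z2_A4_general {p : ℕ} [Fact p.Prime] {R G : Type*} [CommRing R] [Group G]
    [Finite G] {N : Subgroup G} [N.Normal] (hp : (p : R) ∈ Ring.jacobson R) (hN : IsPGroup p N)
    (hindex : ¬ p ∣ N.index) :
    (⊥ : Ideal R[G]).jacobson =
      TwoSidedIdeal.asIdeal (TwoSidedIdeal.span
        (mapDomainRingHom R N.subtype '' ((⊥ : Ideal R[N]).jacobson : Set R[N]))) := by
  simp only [Ideal.jacobson_bot]
  apply le_antisymm
  · rw [jacobson_monoidAlgebra_eq_span hp hN hindex, Ideal.span_le]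
    rintro _ (⟨r, hr, rfl⟩ | ⟨n, hn, rfl⟩)
    · exact TwoSidedIdeal.subset_span
        ⟨algebraMap R R[N] r, algebraMap_mem_jacobson hr, by simp⟩
    · exact TwoSidedIdeal.subset_span
        ⟨of R N ⟨n, hn⟩ - 1,
          of_sub_one_mem_jacobson hp (hN.to_subgroup ⊤) (Subgroup.mem_top _),
          by rw [map_sub, map_one]; simp⟩
  · have hspan : TwoSidedIdeal.span (mapDomainRingHom R N.subtype '' Ring.jacobson R[N]) ≤
        (Ring.jacobson R[G]).toTwoSided := by
      rw [TwoSidedIdeal.span_le]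
      rintro _ ⟨x, hx, rfl⟩
      exact Ideal.mem_toTwoSided.2 (jacobson_le_comap_mapDomainRingHom_subtype hp hN hx)
    exact fun x hx => Ideal.mem_toTwoSided.1 (hspan hx)

theorem padicInt_natCast_mem_jacobson (p : ℕ) [Fact p.Prime] :
    (p : ℤ_[p]) ∈ Ring.jacobson ℤ_[p] := by
  rw [IsLocalRing.ringJacobson_eq_maximalIdeal, PadicInt.maximalIdeal_eq_span_p]
  exact Ideal.mem_span_singleton_self _

theorem mem_V4 {g : A4} : g ∈ V4 ↔ g ∈ ({1, aP, bP, cP} : Finset A4) := by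
  rw [← Finset.mem_coe]
  simp only [Finset.coe_insert, Finset.coe_singleton]
  rfl

instance normal_V4 : V4.Normal := by
  constructor
  simp only [mem_V4]
  decide

theorem card_V4 : Nat.card V4 = 4 := by
  rw [Nat.subtype_card _ fun _ => mem_V4.symm]
  decide

theorem index_V4 : V4.index = 3 := by
  have hcard : Nat.card A4 = 12 := by rw [Nat.card_eq_fintype_card]; decide
  have := V4.card_mul_index
  rw [card_V4, hcard] at this
  lia

/-- The Jacobson radical of `ℤ₂[A₄]` equals the two-sided ideal generated by the image of
the Jacobson radical of `ℤ₂[V₄]` under the ring homomorphism `ℤ₂[V₄] → ℤ₂[A₄]` induced by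
the inclusion `V₄ ≤ A₄`. -/
theorem jacobson_radical_Z2_A4 :
    (⊥ : Ideal (MonoidAlgebra ℤ_[2] A4)).jacobson =
      TwoSidedIdeal.asIdeal
        (TwoSidedIdeal.span
          ((MonoidAlgebra.mapDomainRingHom ℤ_[2] V4.subtype) ''
            ((⊥ : Ideal (MonoidAlgebra ℤ_[2] V4)).jacobson : Set (MonoidAlgebra ℤ_[2] V4)))) :=
  jacobson_radical_Z2_A4_general (padicInt_natCast_mem_jacobson 2)
    (IsPGroup.of_card (n := 2) card_V4) (by simp [index_V4])
end

section
/- Let ℤ₃ carry the trivial A₄-action. Then for every n ≥ 1 the group cohomology H^n(A₄, ℤ₃) is isomorphic to ℤ/3ℤ if n is even and is zero if n is odd. -/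
/-!
The Klein four-group `V₄` is normal in `A₄` with quotient of order `3`, and `4` is a unit in `ℤ₃`.
If `f : G →* Q` is surjective and its kernel has finite order invertible in `k`, then averaging over
the kernel shows that coinduction along `f` is exact. Its left adjoint, restriction along `f`,
therefore preserves projectives; being also exact and fully faithful, it induces isomorphisms
`Hⁿ(Q, A) ≅ Hⁿ(G, A)`. This reduces `A₄` to the cyclic group of order `3`, whose cohomology is
computed by the periodic complex with terms `ℤ₃` and differentials alternately `0` and `3`.
-/

open CategoryTheory

universe t u v w

section Restriction

variable {k : Type u} [CommRing k]

theorem exists_mem_invariants_eq_of_surjective {N V W : Type*} [Group N] [Finite N]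
    (hN : IsUnit (Nat.card N : k)) [AddCommGroup V] [Module k V] [AddCommGroup W] [Module k W]
    {ρ : Representation k N V} {σ : Representation k N W} (φ : ρ.IntertwiningMap σ)
    (hφ : Function.Surjective φ) {w : W} (hw : w ∈ σ.invariants) :
    ∃ v ∈ ρ.invariants, φ v = w := by
  have := Fintype.ofFinite N
  have : Invertible (Fintype.card N : k) := (Nat.card_eq_fintype_card (α := N) ▸ hN).invertible
  obtain ⟨v, rfl⟩ := hφ w
  refine ⟨ρ.averageMap v, ρ.averageMap_invariant v, ?_⟩
  rw [← σ.averageMap_id _ hw]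
  simp [GroupAlgebra.average, map_sum, φ.isIntertwining]

section Functors

variable {G : Type v} {Q : Type w} [Group G] [Group Q] {f : G →* Q} [Finite f.ker]

theorem preservesEpimorphisms_coindFunctor (hf : Function.Surjective f)
    (hker : IsUnit (Nat.card f.ker : k)) :
    (Rep.coindFunctor.{t} k f).PreservesEpimorphisms where
  preserves {X Y} φ _ := by
    refine (Rep.epi_iff_surjective _).2 fun y ↦ ?_
    have hy (n : f.ker) : Y.ρ n (y.1 1) = y.1 1 := by
      simpa [f.mem_ker.1 n.2] using (y.2 n 1).symm
    -- `y` is determined by the `f.ker`-invariant vector `y 1`, so it suffices to lift the latter.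
    obtain ⟨x, hx, hxy⟩ := exists_mem_invariants_eq_of_surjective hker
      ((Rep.resFunctor f.ker.subtype).map φ).hom ((Rep.epi_iff_surjective φ).1 ‹_›) hy
    have ρ_apply_eq {g g' : G} (h : f g = f g') : X.ρ g x = X.ρ g' x := by
      have hmem : g⁻¹ * g' ∈ f.ker := by simp [h]
      simpa [← Module.End.mul_apply, ← map_mul] using congr(X.ρ g $(hx ⟨_, hmem⟩)).symm
    choose s hs using hf
    refine ⟨⟨fun h ↦ X.ρ (s h) x, fun g h ↦ ?_⟩, Subtype.ext <| funext fun h ↦ ?_⟩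
    · simpa using ρ_apply_eq (show f (s (f g * h)) = f (g * s h) by simp [hs])
    · calc φ.hom (X.ρ (s h) x) = Y.ρ (s h) (φ.hom x) := Rep.hom_comm_apply φ _ _
        _ = Y.ρ (s h) (y.1 1) := congrArg _ hxy
        _ = y.1 h := by simpa [hs] using (y.2 (s h) 1).symm

theorem preservesProjectiveObjects_resFunctor (hf : Function.Surjective f)
    (hker : IsUnit (Nat.card f.ker : k)) :
    (Rep.resFunctor.{max w t} (k := k) f).PreservesProjectiveObjects :=
  have := preservesEpimorphisms_coindFunctor.{max w t} hf hker
  (Rep.resFunctor f).preservesProjectiveObjects_of_adjunction_of_preservesEpimorphisms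
    (Rep.resCoindAdjunction.{t} k f)

end Functors

/-- A fully faithful linear functor `F` induces an isomorphism `Hom(F(K), F(Y)) ≅ Hom(K, Y)` of
cochain complexes, for every chain complex `K` and every object `Y`. -/
noncomputable def linearYonedaObjMapIso {C D : Type*} [Category.{v} C] [Category.{v} D]
    [Abelian C] [Abelian D] (R : Type*) [Ring R] [Linear R C] [Linear R D] (F : C ⥤ D) [F.Additive]
    [F.Linear R] [F.Full] [F.Faithful] {α : Type*} [AddRightCancelSemigroup α] [One α]
    (K : ChainComplex C α) (Y : C) :
    ChainComplex.linearYonedaObj ((F.mapHomologicalComplex _).obj K) R (F.obj Y) ≅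
      K.linearYonedaObj R Y :=
  (HomologicalComplex.Hom.isoOfComponents
    (fun _ ↦ (LinearEquiv.ofBijective (F.mapLinearMap R)
      ⟨F.map_injective, F.map_surjective⟩).toModuleIso)
    fun _ _ _ ↦ ModuleCat.hom_ext (LinearMap.ext fun g ↦ (F.map_comp _ g).symm)).symm

/-- The inflation isomorphism `Hⁿ(G, A) ≅ Hⁿ(Q, A)` along a surjection `f : G →* Q` whose kernel
has finite order invertible in the coefficient ring. -/
noncomputable def groupCohomologyResIso {G Q : Type u} [Group G] [Group Q] {f : G →* Q}
    [Finite f.ker] (hf : Function.Surjective f) (hker : IsUnit (Nat.card f.ker : k))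
    (A : Rep.{u} k Q) (n : ℕ) :
    groupCohomology (Rep.res f A) n ≅ groupCohomology A n :=
  have := preservesProjectiveObjects_resFunctor.{u} hf hker
  have := Rep.full_res (k := k) f hf
  let P := Rep.barResolution k Q
  groupCohomologyIso _ n ((Rep.resFunctor f).mapProjectiveResolution P) ≪≫
    HomologicalComplex.homologyMapIso (linearYonedaObjMapIso k (Rep.resFunctor f) P.complex A) n ≪≫
    (groupCohomologyIso A n P).symm

/-- The inflation isomorphism `Hⁿ(G, V) ≅ Hⁿ(G ⧸ N, V)` for trivial coefficients and a finite normal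
subgroup `N` of order invertible in the coefficient ring. -/
noncomputable def groupCohomologyTrivialIsoQuotient {G : Type u} [Group G] (N : Subgroup G)
    [N.Normal] [Finite N] (hN : IsUnit (Nat.card N : k)) (V : Type u) [AddCommGroup V] [Module k V]
    (n : ℕ) :
    groupCohomology (Rep.trivial k G V) n ≅ groupCohomology (Rep.trivial k (G ⧸ N) V) n :=
  have hker : (QuotientGroup.mk' N).ker = N := QuotientGroup.ker_mk' N
  have : Finite (QuotientGroup.mk' N).ker := by rwa [hker]
  groupCohomologyResIso (QuotientGroup.mk'_surjective N) (by rwa [hker])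
    (Rep.trivial k (G ⧸ N) V) n

end Restriction

section Cyclic

theorem norm_trivial_eq_natCast_card {k G V : Type*} [CommRing k] [Group G] [Fintype G]
    [AddCommGroup V] [Module k V] :
    (Rep.trivial k G V).norm.hom.toLinearMap = (Nat.card G : Module.End k V) := by
  ext
  simp [Rep.norm, Representation.norm]

theorem applyAsHom_trivial {k G V : Type*} [CommRing k] [CommGroup G] [AddCommGroup V] [Module k V]
    (g : G) : Rep.applyAsHom (Rep.trivial k G V) g = 𝟙 _ := by
  ext
  simp [Rep.applyAsHom]

variable (k G V : Type u) [CommRing k] [Group G] [Finite G] [IsCyclic G] [AddCommGroup V]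
  [Module k V]

/-- `Hⁿ(G, V) ≃ V / |G|V` for a finite cyclic group `G` acting trivially on `V` and a positive even
`n`. The equivalence depends on a chosen generator of `G`. -/
noncomputable def groupCohomologyTrivialEquivOfEven (n : ℕ) [NeZero n] (hn : Even n) :
    groupCohomology (Rep.trivial k G V) n ≃ₗ[k]
      V ⧸ LinearMap.range (Nat.card G : Module.End k V) :=
  letI := IsCyclic.commGroup (α := G)
  letI := Fintype.ofFinite G
  have hg := (IsCyclic.exists_generator (α := G)).choose_spec
  let S := Rep.FiniteCyclicGroup.normHomCompSub (Rep.trivial k G V) _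
  have hS : S.g = 0 := by ext; simp [S, applyAsHom_trivial]
  (Rep.FiniteCyclicGroup.groupCohomologyIsoEven _ _ hg n hn ≪≫
    S.asIsoHomologyι hS ≪≫ S.moduleCatOpcyclesIso).toLinearEquiv ≪≫ₗ
    Submodule.quotEquivOfEq _ _ (congrArg LinearMap.range norm_trivial_eq_natCast_card)

/-- `Hⁿ(G, V) ≃ V[|G|]` for a finite cyclic group `G` acting trivially on `V` and an odd `n`.
The equivalence depends on a chosen generator of `G`. -/
noncomputable def groupCohomologyTrivialEquivOfOdd (n : ℕ) (hn : Odd n) :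
    groupCohomology (Rep.trivial k G V) n ≃ₗ[k]
      LinearMap.ker (Nat.card G : Module.End k V) :=
  letI := IsCyclic.commGroup (α := G)
  letI := Fintype.ofFinite G
  have hg := (IsCyclic.exists_generator (α := G)).choose_spec
  let S := Rep.FiniteCyclicGroup.subCompNormHom (Rep.trivial k G V) _
  have hS : S.f = 0 := by ext; simp [S, applyAsHom_trivial]
  (Rep.FiniteCyclicGroup.groupCohomologyIsoOdd _ _ hg n hn ≪≫
    (S.asIsoHomologyπ hS).symm ≪≫ S.moduleCatCyclesIso).toLinearEquiv ≪≫ₗ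
    LinearEquiv.ofEq _ _ (congrArg LinearMap.ker norm_trivial_eq_natCast_card)

end Cyclic

section PadicInt

variable {p : ℕ} [Fact p.Prime]

theorem isUnit_natCast_padicInt_iff_coprime {m : ℕ} : IsUnit (m : ℤ_[p]) ↔ m.Coprime p := by
  rw [← isUnit_map_iff PadicInt.toZMod, map_natCast, ZMod.isUnit_iff_coprime]

theorem range_natCast_eq_ker_toZMod :
    LinearMap.range (p : Module.End ℤ_[p] ℤ_[p]) =
      RingHom.ker (PadicInt.toZMod : ℤ_[p] →+* ZMod p) := by
  ext x
  simp [PadicInt.ker_toZMod, PadicInt.maximalIdeal_eq_span_p, Ideal.mem_span_singleton,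
    dvd_iff_exists_eq_mul_right, eq_comm]

variable (p) in
/-- Reduction modulo `p` identifies `ℤₚ / pℤₚ` with `ℤ/pℤ`. -/
noncomputable def padicIntQuotientEquivZMod :
    (ℤ_[p] ⧸ LinearMap.range (p : Module.End ℤ_[p] ℤ_[p])) ≃+ ZMod p :=
  (Submodule.quotEquivOfEq _ _ range_natCast_eq_ker_toZMod).toAddEquiv.trans
    (RingHom.quotientKerEquivOfSurjective (ZMod.ringHom_surjective PadicInt.toZMod)).toAddEquiv

end PadicInt

theorem card_alternatingGroup_quotient_kleinFour {α : Type*} [DecidableEq α] [Fintype α]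
    (hα : Nat.card α = 4) :
    Nat.card (alternatingGroup α ⧸ alternatingGroup.kleinFour α) = 3 := by
  have h := Subgroup.card_eq_card_quotient_mul_card_subgroup (alternatingGroup.kleinFour α)
  rw [alternatingGroup.card_of_card_eq_four hα,
    alternatingGroup.kleinFour_card_of_card_eq_four hα] at h
  lia

/-- With trivial action of `A₄` on `ℤ₃`, for every `n ≥ 1` the group cohomology
`H^n(A₄, ℤ₃)` is `ℤ/3ℤ` for even `n` and vanishes for odd `n`. -/
theorem cohomology_A4_trivial_Z3 (n : ℕ) (hn : 1 ≤ n) :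
    (Even n → Nonempty (groupCohomology (Rep.trivial ℤ_[3] A4 ℤ_[3]) n ≃+ ZMod 3)) ∧
    (Odd n → Subsingleton (groupCohomology (Rep.trivial ℤ_[3] A4 ℤ_[3]) n)) := by
  let V := alternatingGroup.kleinFour (Fin 4)
  have : V.Normal := alternatingGroup.normal_kleinFour (Nat.card_fin 4)
  have card_quotient : Nat.card (A4 ⧸ V) = 3 :=
    card_alternatingGroup_quotient_kleinFour (Nat.card_fin 4)
  have : IsCyclic (A4 ⧸ V) := isCyclic_of_prime_card card_quotient
  have isUnit_card : IsUnit (Nat.card V : ℤ_[3]) := by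
    rw [alternatingGroup.kleinFour_card_of_card_eq_four (Nat.card_fin 4),
      isUnit_natCast_padicInt_iff_coprime]
    decide
  have inflation := (groupCohomologyTrivialIsoQuotient V isUnit_card ℤ_[3] n).toLinearEquiv
  have : NeZero n := ⟨by lia⟩
  refine ⟨fun heven ↦ ?_, fun hodd ↦ ?_⟩
  · have e := inflation ≪≫ₗ groupCohomologyTrivialEquivOfEven _ _ _ n heven
    rw [card_quotient] at e
    exact ⟨e.toAddEquiv.trans (padicIntQuotientEquivZMod 3)⟩
  · have e := inflation ≪≫ₗ groupCohomologyTrivialEquivOfOdd _ _ _ n hodd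
    have ker_eq_bot : LinearMap.ker ((3 : ℕ) : Module.End ℤ_[3] ℤ_[3]) = ⊥ := by
      ext; simp
    rw [card_quotient, ker_eq_bot] at e
    exact e.toEquiv.subsingleton
end

section
/- Let ℤ₂ carry the trivial A₄-action. For every n ≥ 1 with n not divisible by 6, the group cohomology H^n(A₄, ℤ₂) is an elementary abelian 2-group: H^n(A₄, ℤ₂) ≅ (ℤ/2ℤ)^{⌊n/6⌋ + r}, where r = 1 if n ≡ 3 or 4 (mod 6) and r = 0 if n ≡ 1, 2 or 5 (mod 6). -/
/-!
Let `k = ℤ₂`, or any ring in which `2` is regular with `k / 2` of order two and `3` is invertible.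
The tetrahedron, on which `A₄` acts by rotations, has an exact cochain complex
`0 → k → k[vertices] → {alternating functions on the oriented edges} → k[faces] → k → 0`.
Vertices and faces have stabilizers of order three, so their modules are acyclic in positive
degrees; the edges contribute the cohomology of a group of order two with sign coefficients, which
has order `1` in even and `2` in odd degrees. With `h n` the order of `Hⁿ(A₄, k)`, dimension
shifting thus gives, for odd `n`, either `h (n + 3) = 2 * h n` and `h (n + 4) = h (n + 1)`, or
`h (n + 3) = h n` and `h (n + 1) = 2 * h (n + 4)`.

The Klein four-group `V` decides between the two: `Hⁿ(A₄, k)` is the module of invariants in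
`Hⁿ(V, k)` of the group `A₄ / V` of order three, so `h n` is congruent modulo `3` to the order of
`Hⁿ(V, k)`. That order follows from the two exact sequences relating `k`, the sign representation
and the module induced from a subgroup of index two; as `V` retracts onto this subgroup, their long
exact cohomology sequences break up into short ones.
-/

open CategoryTheory Limits groupCohomology

universe u

namespace CohomologyA4

section Counting

variable {R A B C D M : Type*} [Ring R] [AddCommGroup A] [AddCommGroup B] [AddCommGroup C]
  [AddCommGroup D] [AddCommGroup M] [Module R A] [Module R B] [Module R C] [Module R D]
  [Module R M]

theorem card_ker_mul_card_range (f : A →ₗ[R] B) :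
    Nat.card f.ker * Nat.card f.range = Nat.card A :=
  AddSubgroup.index_ker f.toAddMonoidHom ▸ AddSubgroup.card_mul_index f.toAddMonoidHom.ker

theorem card_range_of_injective {f : A →ₗ[R] B} (hf : Function.Injective f) :
    Nat.card f.range = Nat.card A :=
  Nat.card_congr (LinearEquiv.ofInjective f hf).symm.toEquiv

theorem card_range_of_surjective {f : A →ₗ[R] B} (hf : Function.Surjective f) :
    Nat.card f.range = Nat.card B :=
  Nat.card_congr (LinearEquiv.ofTop _ (LinearMap.range_eq_top.2 hf)).toEquiv

theorem card_eq_mul_of_exact {f : A →ₗ[R] B} {g : B →ₗ[R] C} (hf : Function.Injective f)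
    (hfg : Function.Exact f g) (hg : Function.Surjective g) :
    Nat.card B = Nat.card A * Nat.card C := by
  rw [← card_ker_mul_card_range g, hfg.linearMap_ker_eq, card_range_of_injective hf,
    card_range_of_surjective hg]

theorem card_of_exact_of_prime_card {f : A →ₗ[R] B} {g : B →ₗ[R] M} {h : M →ₗ[R] C}
    {l : C →ₗ[R] D} (hf : Function.Injective f) (hfg : Function.Exact f g)
    (hgh : Function.Exact g h) (hhl : Function.Exact h l) (hl : Function.Surjective l)
    {p : ℕ} (hp : p.Prime) (hM : Nat.card M = p) :
    (Nat.card B = p * Nat.card A ∧ Nat.card C = Nat.card D) ∨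
      (Nat.card B = Nat.card A ∧ Nat.card C = p * Nat.card D) := by
  have hB := card_ker_mul_card_range g
  have hC := card_ker_mul_card_range l
  have hp' := card_ker_mul_card_range h
  rw [hfg.linearMap_ker_eq, card_range_of_injective hf] at hB
  rw [hhl.linearMap_ker_eq, card_range_of_surjective hl] at hC
  rw [hgh.linearMap_ker_eq, hM] at hp'
  rw [← hB, ← hC]
  rcases hp.eq_one_or_self_of_dvd _ ⟨_, hp'.symm⟩ with hg | hg
  · simp_all
  · have hh : Nat.card h.range = 1 := Nat.eq_of_mul_eq_mul_left hp.pos (by simp_all)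
    exact .inl ⟨by rw [hg, mul_comm], by rw [hh, one_mul]⟩

end Counting

section InducedMap

variable {k G : Type u} [CommRing k] [Group G] {A B C : Rep k G}

instance functor_additive (n : ℕ) : (functor k G n).Additive where
  map_add {A B f g} := by
    have h : (cochainsFunctor k G).map (f + g) = _ := Functor.map_add _
    exact congr(HomologicalComplex.homologyMap $h n).trans
      (HomologicalComplex.homologyMap_add _ _ _)

/-- The map `Hⁿ(G, A) → Hⁿ(G, B)` induced by a morphism of representations, as a linear map. -/
noncomputable def inducedMap (f : A ⟶ B) (n : ℕ) :
    groupCohomology A n →ₗ[k] groupCohomology B n :=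
  ((functor k G n).map f).hom

theorem inducedMap_id (n : ℕ) : inducedMap (𝟙 A) n = LinearMap.id :=
  congr(($((functor k G n).map_id A)).hom)

theorem inducedMap_zero (n : ℕ) : inducedMap (0 : A ⟶ B) n = 0 :=
  congrArg ModuleCat.Hom.hom ((functor k G n).map_zero A B)

theorem inducedMap_comp (f : A ⟶ B) (g : B ⟶ C) (n : ℕ) :
    inducedMap (f ≫ g) n = inducedMap g n ∘ₗ inducedMap f n :=
  congr(($((functor k G n).map_comp f g)).hom)

theorem inducedMap_sum {ι : Type*} (s : Finset ι) (f : ι → (A ⟶ B)) (n : ℕ) :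
    inducedMap (∑ i ∈ s, f i) n = ∑ i ∈ s, inducedMap (f i) n := by
  simp only [inducedMap, Functor.map_sum, ModuleCat.hom_sum]
  rfl

theorem inducedMap_nsmul_id (m n : ℕ) (x : groupCohomology A n) :
    inducedMap (m • 𝟙 A) n x = m • x := by
  rw [inducedMap, Functor.map_nsmul, ModuleCat.hom_nsmul]
  exact congr(m • $(inducedMap_id n) x)

theorem inducedMap_zero_injective {f : A ⟶ B}
    (hf : ∀ x ∈ A.ρ.invariants, f.hom x = 0 → x = 0) : Function.Injective (inducedMap f 0) := by
  refine (injective_iff_map_eq_zero _).2 fun x hx => ?_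
  have h : (Rep.invariantsFunctor k G).map f ((H0Iso A).hom x) = 0 :=
    (congr($(map_id_comp_H0Iso_hom f) x)).symm.trans
      ((congrArg (H0Iso B).hom hx).trans (map_zero _))
  exact (map_eq_zero_iff _ (H0Iso A).toLinearEquiv.injective).1 <|
    Subtype.ext (hf _ ((H0Iso A).hom x).2 congr(($h).1))

end InducedMap

section LongExactSequence

variable {k G : Type u} [CommRing k] [Group G] {X : ShortComplex (Rep k G)}

theorem exact_of_ker_le_range {A B C : Rep k G} {f : A ⟶ B} {g : B ⟶ C} (w : f ≫ g = 0)
    (hfg : ∀ x, g.hom x = 0 → ∃ y, f.hom y = x) : (ShortComplex.mk f g w).Exact := by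
  rwa [← ShortComplex.exact_map_iff_of_faithful _ (forget₂ (Rep k G) (ModuleCat k)),
    ShortComplex.moduleCat_exact_iff]

theorem shortExact_of_exact {A B C : Rep k G} {f : A ⟶ B} {g : B ⟶ C} (w : f ≫ g = 0)
    (hf : Function.Injective f.hom) (hfg : ∀ x, g.hom x = 0 → ∃ y, f.hom y = x)
    (hg : Function.Surjective g.hom) : (ShortComplex.mk f g w).ShortExact := by
  have : Mono f := (Rep.mono_iff_injective f).2 hf
  have : Epi g := (Rep.epi_iff_surjective g).2 hg
  exact { exact := exact_of_ker_le_range w hfg }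

theorem exact_inducedMap (hX : X.ShortExact) (n : ℕ) :
    Function.Exact (inducedMap X.f n) (inducedMap X.g n) :=
  (ShortComplex.ShortExact.moduleCat_exact_iff_function_exact _).1 (mapShortComplex₂_exact hX n)

theorem exact_inducedMap_δ (hX : X.ShortExact) (n : ℕ) :
    Function.Exact (inducedMap X.g n) (δ hX n (n + 1) rfl).hom :=
  (ShortComplex.ShortExact.moduleCat_exact_iff_function_exact _).1
    (mapShortComplex₃_exact hX rfl)

theorem exact_δ_inducedMap (hX : X.ShortExact) (n : ℕ) :
    Function.Exact (δ hX n (n + 1) rfl).hom (inducedMap X.f (n + 1)) :=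
  (ShortComplex.ShortExact.moduleCat_exact_iff_function_exact _).1
    (mapShortComplex₁_exact hX rfl)

theorem card_X₁_succ (hX : X.ShortExact) {n : ℕ} (h₀ : inducedMap X.g n = 0)
    (h₁ : inducedMap X.g (n + 1) = 0) :
    Nat.card (groupCohomology X.X₁ (n + 1)) =
      Nat.card (groupCohomology X.X₃ n) * Nat.card (groupCohomology X.X₂ (n + 1)) :=
  card_eq_mul_of_exact
    ((LinearMap.injective_iff_eq_zero_of_exact (exact_inducedMap_δ hX n)).2 h₀)
    (exact_δ_inducedMap hX n)
    ((LinearMap.surjective_iff_eq_zero_of_exact (exact_inducedMap hX (n + 1))).2 h₁)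

theorem card_X₁_succ_of_isZero (hX : X.ShortExact) {n : ℕ}
    (h₀ : IsZero (groupCohomology X.X₂ n)) (h₁ : IsZero (groupCohomology X.X₂ (n + 1))) :
    Nat.card (groupCohomology X.X₁ (n + 1)) = Nat.card (groupCohomology X.X₃ n) :=
  have := isIso_δ_of_isZero hX n h₀ h₁
  (Nat.card_congr (asIso (δ hX n (n + 1) rfl)).toLinearEquiv.toEquiv).symm

theorem card_of_prime_card_X₂ (hX : X.ShortExact) {n : ℕ} {p : ℕ} (hp : p.Prime)
    (h₀ : IsZero (groupCohomology X.X₂ n)) (h₁ : Nat.card (groupCohomology X.X₂ (n + 1)) = p)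
    (h₂ : IsZero (groupCohomology X.X₂ (n + 2))) :
    (Nat.card (groupCohomology X.X₁ (n + 1)) = p * Nat.card (groupCohomology X.X₃ n) ∧
      Nat.card (groupCohomology X.X₃ (n + 1)) = Nat.card (groupCohomology X.X₁ (n + 2))) ∨
    (Nat.card (groupCohomology X.X₁ (n + 1)) = Nat.card (groupCohomology X.X₃ n) ∧
      Nat.card (groupCohomology X.X₃ (n + 1)) = p * Nat.card (groupCohomology X.X₁ (n + 2))) :=
  card_of_exact_of_prime_card
    ((ModuleCat.mono_iff_injective _).1 (mono_δ_of_isZero hX n h₀)) (exact_δ_inducedMap hX n)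
    (exact_inducedMap hX (n + 1)) (exact_inducedMap_δ hX (n + 1))
    ((ModuleCat.epi_iff_surjective _).1 (epi_δ_of_isZero hX (n + 1) h₂)) hp h₁

theorem shortExact_kernelLift {C : Type*} [Category C] [Abelian C] {X Y Z W : C} {f : X ⟶ Y}
    {g : Y ⟶ Z} {h : Z ⟶ W} [Mono f] {wf : f ≫ g = 0} {wg : g ≫ h = 0}
    (hf : (ShortComplex.mk f g wf).Exact) (hg : (ShortComplex.mk g h wg).Exact) :
    (ShortComplex.mk f (kernel.lift h g wg)
      (by simp [← cancel_mono (kernel.ι h), wf])).ShortExact where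
  exact := ShortComplex.exact_of_f_is_kernel _ <|
    isKernelOfComp (kernel.ι h) _ hf.fIsKernel _ (kernel.lift_ι h g wg)
  epi_g := hg.epi_kernelLift

variable {A P M F B : Rep k G} {d₀ : A ⟶ P} {d₁ : P ⟶ M} {d₂ : M ⟶ F} {d₃ : F ⟶ B}
  {w₀ : d₀ ≫ d₁ = 0} {w₁ : d₁ ≫ d₂ = 0} {w₂ : d₂ ≫ d₃ = 0} [Mono d₀]
  (h₀ : (ShortComplex.mk d₀ d₁ w₀).Exact) (h₁ : (ShortComplex.mk d₁ d₂ w₁).Exact)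
  (h₂ : (ShortComplex.mk d₂ d₃ w₂).Exact) (hP : ∀ n, IsZero (groupCohomology P (n + 1)))
include h₀ h₁ h₂ hP

theorem card_of_exact_of_prime_card_middle [Epi d₃] (hF : ∀ n, IsZero (groupCohomology F (n + 1)))
    {p n : ℕ} (hp : p.Prime) (hM₀ : IsZero (groupCohomology M (n + 2)))
    (hM₁ : Nat.card (groupCohomology M (n + 3)) = p)
    (hM₂ : IsZero (groupCohomology M (n + 4))) :
    (Nat.card (groupCohomology A (n + 4)) = p * Nat.card (groupCohomology B (n + 1)) ∧
      Nat.card (groupCohomology B (n + 2)) = Nat.card (groupCohomology A (n + 5))) ∨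
    (Nat.card (groupCohomology A (n + 4)) = Nat.card (groupCohomology B (n + 1)) ∧
      Nat.card (groupCohomology B (n + 2)) = p * Nat.card (groupCohomology A (n + 5))) := by
  have hA (i : ℕ) : Nat.card (groupCohomology A (i + 2)) =
      Nat.card (groupCohomology (kernel d₂) (i + 1)) :=
    card_X₁_succ_of_isZero (shortExact_kernelLift h₀ h₁) (hP i) (hP (i + 1))
  have hB (i : ℕ) : Nat.card (groupCohomology (kernel d₃) (i + 2)) =
      Nat.card (groupCohomology B (i + 1)) :=
    card_X₁_succ_of_isZero (X := .mk (kernel.ι d₃) d₃ (kernel.condition d₃))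
      { exact := ShortComplex.exact_kernel d₃ } (hF i) (hF (i + 1))
  have h := card_of_prime_card_X₂ (shortExact_kernelLift (ShortComplex.exact_kernel d₂) h₂)
    hp hM₀ hM₁ hM₂
  rwa [← hA, hB, hB, ← hA] at h

theorem card_dvd_of_isZero_H0_kernel (hF : IsZero (groupCohomology (kernel d₃) 0)) :
    Nat.card (groupCohomology A 2) ∣ Nat.card (groupCohomology M 1) := by
  have hA := card_X₁_succ_of_isZero (shortExact_kernelLift h₀ h₁) (hP 0) (hP 1)
  have hι : Function.Injective (inducedMap (kernel.ι d₂) 1) :=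
    (LinearMap.injective_iff_eq_zero_of_exact
      (exact_δ_inducedMap (shortExact_kernelLift (ShortComplex.exact_kernel d₂) h₂) 0)).2
      (congrArg ModuleCat.Hom.hom (hF.eq_of_src _ 0))
  rw [hA]
  exact AddSubgroup.card_dvd_of_injective (inducedMap (kernel.ι d₂) 1).toAddMonoidHom hι

end LongExactSequence

noncomputable section Coinduction

variable (k : Type u) {G : Type u} [CommRing k] [Group G] (S : Subgroup G)

/-- The permutation module of functions on `S \ G`: it is realised as the functions `f : G → k`
with `f (s * x) = f x` for `s ∈ S`, on which `G` acts by right translation. -/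
abbrev coindTrivial : Rep k G := Rep.coind S.subtype (Rep.trivial k S k)

/-- The inclusion of the constant functions in the permutation module of functions on `S \ G`. -/
def constants : Rep.trivial k G k ⟶ coindTrivial k S :=
  Rep.resCoindToHom S.subtype (Rep.trivial k G k) (Rep.trivial k S k) (𝟙 _)

variable {k S}

instance mono_constants : Mono (constants k S) :=
  (Rep.mono_iff_injective _).2 fun _ _ h => congrFun congr(($h).1) 1

theorem coindTrivial_mul_left (f : coindTrivial k S) {s : G} (hs : s ∈ S) (x : G) :
    f.1 (s * x) = f.1 x :=
  f.2 ⟨s, hs⟩ x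

theorem coindTrivial_inv_eq (f : coindTrivial k S) {x y : G} (h : (x : G ⧸ S) = y) :
    f.1 x⁻¹ = f.1 y⁻¹ := by
  simpa using coindTrivial_mul_left f (QuotientGroup.eq.1 h) y⁻¹

theorem coindTrivial_out_inv (f : coindTrivial k S) (x : G) :
    f.1 (x : G ⧸ S).out⁻¹ = f.1 x⁻¹ :=
  coindTrivial_inv_eq f (QuotientGroup.out_eq' _)

theorem coindTrivial_ext {ι : Type*} {e : ι → G}
    (he : Function.Surjective fun i => (((e i)⁻¹ : G) : G ⧸ S)) {f f' : coindTrivial k S}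
    (h : ∀ i, f.1 (e i) = f'.1 (e i)) : f = f' := by
  refine Subtype.ext (funext fun x => ?_)
  obtain ⟨i, hi⟩ := he (x⁻¹ : G)
  have hx (f : coindTrivial k S) : f.1 x = f.1 (e i) := by
    simpa using (coindTrivial_inv_eq f hi).symm
  rw [hx, hx, h]

variable (k S) in
/-- Summation over the cosets `S * x`, as a linear map from all functions on `G` to the functions
on `S \ G`. -/
def orbitSum [Finite S] : (G → k) →ₗ[k] coindTrivial k S :=
  letI := Fintype.ofFinite S
  { toFun q := ⟨fun x => ∑ s : S, q (s * x), fun s _ =>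
      Fintype.sum_equiv (Equiv.mulRight s) _ _ fun _ => congrArg q (mul_assoc _ _ _).symm⟩
    map_add' _ _ := Subtype.ext (funext fun _ => Finset.sum_add_distrib)
    map_smul' _ _ := Subtype.ext (funext fun _ => (Finset.mul_sum ..).symm) }

theorem orbitSum_apply [Finite S] {ι : Type*} [Fintype ι] {e : ι → S} (he : Function.Bijective e)
    (q : G → k) (x : G) : (orbitSum k S q).1 x = ∑ i, q (e i * x) :=
  letI := Fintype.ofFinite S
  (Fintype.sum_bijective e he _ _ fun _ => rfl).symm

theorem orbitSum_eq_single [Finite S] (q : G → k) {x : G} (h : ∀ s ∈ S, s ≠ 1 → q (s * x) = 0) :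
    (orbitSum k S q).1 x = q x := by
  have := Fintype.ofFinite S
  calc (orbitSum k S q).1 x = ∑ s : S, q (s * x) := orbitSum_apply Function.bijective_id q x
    _ = q ((1 : S) * x) :=
      Fintype.sum_eq_single 1 fun s hs => h s s.2 (OneMemClass.coe_eq_one.not.2 hs)
    _ = q x := congrArg q (one_mul x)

theorem bijective_mk_inv_of_bijective_inv_smul {X ι : Type*} [MulAction G X] {v : X} {e : ι → G}
    (he : Function.Bijective fun i => (e i)⁻¹ • v) :
    Function.Bijective fun i => (((e i)⁻¹ : G) : G ⧸ MulAction.stabilizer G v) :=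
  ⟨.of_comp (f := MulAction.ofQuotientStabilizer G v) he.1,
    .of_comp_left (f := MulAction.ofQuotientStabilizer G v) he.2
      (MulAction.injective_ofQuotientStabilizer G v)⟩

variable [S.FiniteIndex]

attribute [local instance] Subgroup.fintypeQuotientOfFiniteIndex

variable (k S) in
/-- The sum of the values of a function on `S \ G`. It induces the transfer in cohomology; the
inverse is there because `G ⧸ S` parametrises left cosets. -/
def transfer : coindTrivial k S ⟶ Rep.trivial k G k :=
  Rep.ofHom
    { toFun f := ∑ q : G ⧸ S, f.1 q.out⁻¹
      map_add' f g := Finset.sum_add_distrib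
      map_smul' a f := (Finset.mul_sum ..).symm
      isIntertwining' g := by
        ext f
        refine Fintype.sum_equiv (MulAction.toPerm g⁻¹) _ _ <| Quotient.ind fun x => ?_
        refine (coindTrivial_out_inv _ x).trans <|
          Eq.trans ?_ (coindTrivial_out_inv f (g⁻¹ * x)).symm
        exact congrArg f.1 (by group) }

theorem transfer_apply {ι : Type*} [Fintype ι] {e : ι → G}
    (he : Function.Bijective fun i => (((e i)⁻¹ : G) : G ⧸ S)) (f : coindTrivial k S) :
    (transfer k S).hom f = ∑ i, f.1 (e i) := by
  refine (Fintype.sum_bijective _ he _ _ fun i => ?_).symm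
  rw [coindTrivial_out_inv, inv_inv]

theorem transfer_surjective : Function.Surjective (transfer k S).hom := by
  classical
  refine fun a => ⟨⟨fun x => if x ∈ S then a else 0, fun s x => ?_⟩, ?_⟩
  · simp [Subgroup.mul_mem_cancel_left _ s.2]
  · refine (Fintype.sum_eq_single ((1 : G) : G ⧸ S) fun q hq => if_neg fun h => hq ?_).trans
      (if_pos ?_)
    · rw [← q.out_eq', QuotientGroup.eq]
      simpa using h
    · simpa using QuotientGroup.eq.1 (QuotientGroup.out_eq' ((1 : G) : G ⧸ S))

instance epi_transfer : Epi (transfer k S) :=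
  (Rep.epi_iff_surjective _).2 transfer_surjective

theorem constants_comp_transfer :
    constants k S ≫ transfer k S = S.index • 𝟙 (Rep.trivial k G k) := by
  refine Rep.hom_ext (DFunLike.ext _ _ fun a => ?_)
  rw [Subgroup.index, Nat.card_eq_fintype_card]
  exact Finset.sum_const a

theorem inducedMap_transfer_constants (n : ℕ) (x : groupCohomology (Rep.trivial k G k) n) :
    inducedMap (transfer k S) n (inducedMap (constants k S) n x) = S.index • x := by
  rw [← LinearMap.comp_apply, ← inducedMap_comp, constants_comp_transfer, inducedMap_nsmul_id]

theorem inducedMap_constants_injective (hS : IsUnit (S.index : k)) (n : ℕ) :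
    Function.Injective (inducedMap (constants k S) n) := by
  refine (injective_iff_map_eq_zero _).2 fun x hx => ?_
  have h := inducedMap_transfer_constants (S := S) n x
  rwa [hx, map_zero, ← Nat.cast_smul_eq_nsmul k, eq_comm, hS.smul_eq_zero] at h

omit [S.FiniteIndex] in
theorem isZero_coind {A : Rep k S} {n : ℕ} (hA : IsZero (groupCohomology A n)) :
    IsZero (groupCohomology (Rep.coind S.subtype A) n) :=
  hA.of_iso (coindIso A n)

omit [S.FiniteIndex] in
theorem card_coindTrivial (n : ℕ) : Nat.card (groupCohomology (coindTrivial k S) n) =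
    Nat.card (groupCohomology (Rep.trivial k S k) n) :=
  Nat.card_congr (coindIso _ n).toLinearEquiv.toEquiv

theorem card_trivial_dvd (hS : IsUnit (S.index : k)) (n : ℕ) :
    Nat.card (groupCohomology (Rep.trivial k G k) n) ∣
      Nat.card (groupCohomology (Rep.trivial k S k) n) := by
  rw [← card_coindTrivial]
  exact AddSubgroup.card_dvd_of_injective (inducedMap (constants k S) n).toAddMonoidHom
    (inducedMap_constants_injective hS n)

theorem nsmul_eq_zero_of_isUnit_index (hS : IsUnit (S.index : k)) {m n : ℕ}
    (h : ∀ y : groupCohomology (Rep.trivial k S k) n, m • y = 0)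
    (x : groupCohomology (Rep.trivial k G k) n) : m • x = 0 := by
  refine inducedMap_constants_injective hS n <|
    (coindIso (S := S) (Rep.trivial k S k) n).toLinearEquiv.injective ?_
  rw [map_nsmul, map_nsmul, h, map_zero, map_zero]

theorem isZero_trivial_succ [Finite G] (hG : IsUnit (Nat.card G : k)) (n : ℕ) :
    IsZero (groupCohomology (Rep.trivial k G k) (n + 1)) := by
  rw [← Subgroup.index_bot] at hG
  have := ModuleCat.subsingleton_of_isZero <|
    isZero_coind <|
      isZero_groupCohomology_succ_of_subsingleton (Rep.trivial k (⊥ : Subgroup G) k) n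
  exact ModuleCat.isZero_of_iff_subsingleton.2 (inducedMap_constants_injective hG _).subsingleton

omit [S.FiniteIndex] in
theorem isZero_coindTrivial_succ [Finite S] (hS : IsUnit (Nat.card S : k)) (n : ℕ) :
    IsZero (groupCohomology (coindTrivial k S) (n + 1)) :=
  isZero_coind (isZero_trivial_succ hS n)

theorem inducedMap_transfer_zero_injective (hS : (S.index : k) ∈ nonZeroDivisors k) :
    Function.Injective (inducedMap (transfer k S) 0) := by
  refine inducedMap_zero_injective fun f hf h => ?_
  have hconst (x : G) : f.1 x = f.1 1 := by
    rw [← one_mul x]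
    exact congrFun (congrArg Subtype.val (hf x)) 1
  have h1 : (S.index : k) * f.1 1 = 0 := by
    rw [← nsmul_eq_mul, Subgroup.index, Nat.card_eq_fintype_card, ← Finset.card_univ,
      ← Finset.sum_const, ← h]
    exact Finset.sum_congr rfl fun q _ => (hconst _).symm
  rw [mul_comm, mul_right_mem_nonZeroDivisors_eq_zero_iff hS] at h1
  exact Subtype.ext (funext fun x => (hconst x).trans h1)

theorem isZero_H0_of_comp_transfer_eq_zero (hS : (S.index : k) ∈ nonZeroDivisors k) {A : Rep k G}
    {f : A ⟶ coindTrivial k S} [Mono f] (w : f ≫ transfer k S = 0) :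
    IsZero (groupCohomology A 0) := by
  have hf : Function.Injective (inducedMap f 0) :=
    inducedMap_zero_injective fun x _ hx =>
      (Rep.mono_iff_injective f).1 inferInstance (hx.trans (map_zero _).symm)
  have h (x) : inducedMap (transfer k S) 0 (inducedMap f 0 x) = 0 := by
    rw [← LinearMap.comp_apply, ← inducedMap_comp, w, inducedMap_zero, LinearMap.zero_apply]
  exact ModuleCat.isZero_of_iff_subsingleton.2
    ⟨fun x y => hf (inducedMap_transfer_zero_injective hS ((h x).trans (h y).symm))⟩

end Coinduction

noncomputable section Retract

variable (k : Type u) {G H K : Type u} [CommRing k] [Group G] [Group H] [Group K]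

/-- The map `Hⁿ(H, k) → Hⁿ(G, k)` induced by a group homomorphism `G → H`, for trivial actions. -/
def pullback (φ : G →* H) (n : ℕ) :
    groupCohomology (Rep.trivial k H k) n →ₗ[k] groupCohomology (Rep.trivial k G k) n :=
  (groupCohomology.map φ (𝟙 (Rep.trivial k G k)) n).hom

theorem pullback_id (n : ℕ) : pullback k (MonoidHom.id G) n = LinearMap.id :=
  congrArg ModuleCat.Hom.hom (groupCohomology.map_id (n := n))

theorem pullback_comp (φ : G →* H) (ψ : H →* K) (n : ℕ) :
    pullback k (ψ.comp φ) n = pullback k φ n ∘ₗ pullback k ψ n :=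
  congrArg ModuleCat.Hom.hom <| (groupCohomology.map_congr rfl rfl n).trans <|
    groupCohomology.map_comp ψ φ (A := Rep.trivial k K k) (B := Rep.trivial k H k)
      (C := Rep.trivial k G k) (𝟙 (Rep.trivial k H k)) (𝟙 (Rep.trivial k G k)) n

variable (S : Subgroup G)

/-- Evaluation at `1 : G` on the coinduced representation, as a morphism of `S`-representations:
the counit of the adjunction between restriction and coinduction. -/
def evalOne : Rep.res S.subtype (coindTrivial k S) ⟶ Rep.trivial k S k :=
  (Rep.resCoindHomEquiv.{u, u} S.subtype (coindTrivial k S) (Rep.trivial k S k)).symm (𝟙 _)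

/-- The Shapiro map `Hⁿ(G, coind k) → Hⁿ(S, k)`: restriction to `S`, then evaluation at `1`. -/
def shapiro (n : ℕ) :
    groupCohomology (coindTrivial k S) n →ₗ[k] groupCohomology (Rep.trivial k S k) n :=
  (groupCohomology.map S.subtype (evalOne k S) n).hom

theorem shapiro_comp_inducedMap_constants (n : ℕ) :
    shapiro k S n ∘ₗ inducedMap (constants k S) n = pullback k S.subtype n := by
  have h := groupCohomology.map_comp (MonoidHom.id G) S.subtype (A := Rep.trivial k G k)
    (constants k S) (evalOne k S) n
  exact congrArg ModuleCat.Hom.hom (h.symm.trans (groupCohomology.map_congr rfl rfl n))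

variable {k S} {r : G →* S} (hr : r.comp S.subtype = MonoidHom.id S) {n : ℕ}
  [Module.Finite k (groupCohomology (Rep.trivial k S k) n)]
include hr

omit [Module.Finite k (groupCohomology (Rep.trivial k S k) n)] in
theorem shapiro_constants_pullback (y : groupCohomology (Rep.trivial k S k) n) :
    shapiro k S n (inducedMap (constants k S) n (pullback k r n y)) = y := by
  rw [← LinearMap.comp_apply, shapiro_comp_inducedMap_constants, ← LinearMap.comp_apply,
    ← pullback_comp, hr, pullback_id, LinearMap.id_apply]

/- Source and target are abstractly isomorphic by Shapiro's lemma, so that a surjection between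
them is bijective as soon as they are finitely generated. -/
theorem shapiro_injective : Function.Injective (shapiro k S n) := by
  let e := (coindIso (S := S) (Rep.trivial k S k) n).toLinearEquiv
  have h : Function.Surjective (shapiro k S n ∘ₗ e.symm.toLinearMap) := fun y =>
    ⟨e (inducedMap (constants k S) n (pullback k r n y)), by
      simp [shapiro_constants_pullback hr]⟩
  have := OrzechProperty.injective_of_surjective_endomorphism _ h
  simpa using this

theorem inducedMap_constants_surjective : Function.Surjective (inducedMap (constants k S) n) :=
  fun y => ⟨pullback k r n (shapiro k S n y),
    shapiro_injective hr (shapiro_constants_pullback hr _)⟩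

theorem index_nsmul_eq_zero [S.FiniteIndex]
    (hS : ∀ y : groupCohomology (Rep.trivial k S k) n, S.index • y = 0)
    (x : groupCohomology (Rep.trivial k G k) n) : S.index • x = 0 := by
  let z := x - pullback k r n (pullback k S.subtype n x)
  have hz : inducedMap (constants k S) n z = 0 := by
    refine shapiro_injective hr ?_
    rw [map_sub, map_sub, shapiro_constants_pullback hr, ← LinearMap.comp_apply,
      shapiro_comp_inducedMap_constants, sub_self, map_zero]
  have h := inducedMap_transfer_constants (S := S) n z
  rw [hz, map_zero, nsmul_sub, ← map_nsmul, hS, map_zero, sub_zero] at h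
  exact h.symm

end Retract

noncomputable section IndexTwo

variable {k G : Type u} [CommRing k] [Group G] {S : Subgroup G}

open scoped Classical in
/-- The homomorphism trivial on the index-two subgroup `S` and sending every element outside `S`
to the involution `a`. -/
def indexTwoHom {M : Type*} [Monoid M] (hS : S.index = 2) {a : M} (ha : a * a = 1) : G →* M where
  toFun g := if g ∈ S then 1 else a
  map_one' := if_pos S.one_mem
  map_mul' x y := by
    have := Subgroup.mul_mem_iff_of_index_two hS (a := x) (b := y)
    by_cases hx : x ∈ S <;> by_cases hy : y ∈ S <;> simp_all

theorem indexTwoHom_of_mem {M : Type*} [Monoid M] (hS : S.index = 2) {a : M} (ha : a * a = 1)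
    {g : G} (hg : g ∈ S) : indexTwoHom hS ha g = 1 :=
  if_pos hg

theorem indexTwoHom_of_notMem {M : Type*} [Monoid M] (hS : S.index = 2) {a : M}
    (ha : a * a = 1) {g : G} (hg : g ∉ S) : indexTwoHom hS ha g = a :=
  if_neg hg

variable (k) in
/-- The rank-one representation of `G` on which `g` acts by `1` if `g` lies in the index-two
subgroup `S` and by `-1` otherwise. -/
abbrev signRep (hS : S.index = 2) : Rep k G :=
  Rep.of (indexTwoHom hS (a := (-1 : Module.End k k)) (LinearMap.ext neg_neg))

variable (hS : S.index = 2)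

theorem signRep_ρ_of_mem {g : G} (hg : g ∈ S) (a : k) : (signRep k hS).ρ g a = a :=
  DFunLike.congr_fun (indexTwoHom_of_mem hS (LinearMap.ext neg_neg) hg) a

theorem signRep_ρ_of_notMem {g : G} (hg : g ∉ S) (a : k) : (signRep k hS).ρ g a = -a :=
  DFunLike.congr_fun (indexTwoHom_of_notMem hS (LinearMap.ext neg_neg) hg) a

variable (k) in
/-- The inclusion of the sign representation in the functions on `S \ G`, with image the functions
whose values on the two cosets are opposite. -/
def signToCoind : signRep k hS ⟶ coindTrivial k S :=
  Rep.resCoindToHom S.subtype (signRep k hS) (Rep.trivial k S k) <| Rep.ofHom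
    { toLinearMap := LinearMap.id
      isIntertwining' g := LinearMap.ext fun a => signRep_ρ_of_mem hS g.2 a }

theorem signToCoind_apply (a : k) (x : G) :
    ((signToCoind k hS).hom a).1 x = (signRep k hS).ρ x a := rfl

include hS in
theorem coindTrivial_eq_of_notMem (f : coindTrivial k S) {x y : G} (hx : x ∉ S) (hy : y ∉ S) :
    f.1 x = f.1 y := by
  have h : x * y⁻¹ ∈ S := (Subgroup.mul_mem_iff_of_index_two hS).2 (by simp [hx, hy])
  simpa using coindTrivial_mul_left f h y

theorem coindTrivial_eq_of_mem (f : coindTrivial k S) {x : G} (hx : x ∈ S) : f.1 x = f.1 1 := by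
  simpa using coindTrivial_mul_left f hx 1

variable {t : G} (ht : t ∉ S)
include ht

theorem exists_coindTrivial_apply (a : k) : ∃ f : coindTrivial k S, f.1 1 = a ∧ f.1 t = 0 := by
  classical
  refine ⟨⟨fun x => if x ∈ S then a else 0, fun s x => ?_⟩, if_pos S.one_mem, if_neg ht⟩
  simp [Subgroup.mul_mem_cancel_left _ s.2]

include hS in
theorem transfer_apply_of_index_two [S.FiniteIndex] (f : coindTrivial k S) :
    (transfer k S).hom f = f.1 1 + f.1 t := by
  rw [transfer_apply (e := ![1, t]), Fin.sum_univ_two]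
  · rfl
  · refine Function.Injective.bijective_of_nat_card_le (fun i j => ?_) ?_
    · fin_cases i <;> fin_cases j <;> simp [QuotientGroup.eq, ht]
    · exact (hS.trans (Nat.card_fin 2).symm).le

variable (k) in
/-- The difference of the two values of a function on `S \ G`, which identifies the quotient of
these functions by the constants with the sign representation. -/
def coindToSign : coindTrivial k S ⟶ signRep k hS :=
  Rep.ofHom
    { toFun f := f.1 1 - f.1 t
      map_add' f g := add_sub_add_comm ..
      map_smul' a f := (smul_sub a _ _).symm
      isIntertwining' g := by
        refine LinearMap.ext fun f => ?_
        change f.1 (1 * g) - f.1 (t * g) = (signRep k hS).ρ g (f.1 1 - f.1 t)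
        have htg := Subgroup.mul_mem_iff_of_index_two hS (a := t) (b := g)
        rw [one_mul]
        by_cases hg : g ∈ S
        · rw [signRep_ρ_of_mem hS hg, coindTrivial_eq_of_mem f hg,
            coindTrivial_eq_of_notMem hS f (by tauto : t * g ∉ S) ht]
        · rw [signRep_ρ_of_notMem hS hg, neg_sub, coindTrivial_eq_of_notMem hS f hg ht,
            coindTrivial_eq_of_mem f (by tauto : t * g ∈ S)] }

theorem shortExact_constants_coindToSign : (ShortComplex.mk (constants k S) (coindToSign k hS ht)
    (Rep.hom_ext (DFunLike.ext _ _ fun a => sub_self a))).ShortExact := by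
  refine shortExact_of_exact _ (fun a b h => congrFun congr(($h).1) 1) (fun f hf => ?_) fun a => ?_
  · refine ⟨f.1 1, Subtype.ext (funext fun x => ?_)⟩
    by_cases hx : x ∈ S
    · exact (coindTrivial_eq_of_mem f hx).symm
    · exact (sub_eq_zero.1 hf).trans (coindTrivial_eq_of_notMem hS f ht hx)
  · obtain ⟨f, h1, h2⟩ := exists_coindTrivial_apply ht a
    exact ⟨f, by rw [← sub_zero a, ← h1, ← h2]; rfl⟩

theorem signToCoind_comp_transfer [S.FiniteIndex] : signToCoind k hS ≫ transfer k S = 0 := by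
  refine Rep.hom_ext (DFunLike.ext _ _ fun a => ?_)
  refine (transfer_apply_of_index_two hS ht ((signToCoind k hS).hom a)).trans ?_
  rw [signToCoind_apply, signToCoind_apply, signRep_ρ_of_mem hS S.one_mem,
    signRep_ρ_of_notMem hS ht]
  exact add_neg_cancel a

theorem shortExact_signToCoind_transfer [S.FiniteIndex] :
    (ShortComplex.mk _ _ (signToCoind_comp_transfer (k := k) hS ht)).ShortExact := by
  refine shortExact_of_exact _ (fun a b h => ?_) (fun f hf => ?_)
    transfer_surjective
  · have h1 := congrFun congr(($h).1) 1
    rwa [signToCoind_apply, signToCoind_apply, signRep_ρ_of_mem hS S.one_mem,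
      signRep_ρ_of_mem hS S.one_mem] at h1
  · refine ⟨f.1 1, Subtype.ext (funext fun x => ?_)⟩
    rw [transfer_apply_of_index_two hS ht] at hf
    rw [signToCoind_apply]
    by_cases hx : x ∈ S
    · rw [signRep_ρ_of_mem hS hx, coindTrivial_eq_of_mem f hx]
    · rw [signRep_ρ_of_notMem hS hx, coindTrivial_eq_of_notMem hS f hx ht,
        eq_neg_of_add_eq_zero_left hf, neg_neg]

end IndexTwo

section IndexTwoCard

variable {k G : Type u} [CommRing k] [Group G] {S : Subgroup G} (hS : S.index = 2)

include hS in
theorem exists_notMem_of_index_two : ∃ t, t ∉ S := by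
  by_contra! h
  simp [(Subgroup.eq_top_iff' S).2 h] at hS

theorem isZero_H0_signRep (h2 : (2 : k) ∈ nonZeroDivisors k) :
    IsZero (groupCohomology (signRep k hS) 0) := by
  obtain ⟨t, ht⟩ := exists_notMem_of_index_two hS
  have : S.FiniteIndex := ⟨by omega⟩
  have : Mono (signToCoind k hS) := (shortExact_signToCoind_transfer hS ht).mono_f
  exact isZero_H0_of_comp_transfer_eq_zero (by rwa [hS]) (signToCoind_comp_transfer hS ht)

variable {r : G →* S} (hr : r.comp S.subtype = MonoidHom.id S)
  [∀ n, Module.Finite k (groupCohomology (Rep.trivial k S k) n)]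
include hr

theorem card_trivial_succ (n : ℕ) :
    Nat.card (groupCohomology (Rep.trivial k G k) (n + 1)) =
      Nat.card (groupCohomology (signRep k hS) n) *
        Nat.card (groupCohomology (Rep.trivial k S k) (n + 1)) := by
  obtain ⟨t, ht⟩ := exists_notMem_of_index_two hS
  have hX := shortExact_constants_coindToSign (k := k) hS ht
  have h (i : ℕ) : inducedMap (coindToSign k hS ht) i = 0 :=
    (LinearMap.surjective_iff_eq_zero_of_exact (exact_inducedMap hX i)).1
      (inducedMap_constants_surjective hr)
  rw [← card_coindTrivial]
  exact card_X₁_succ hX (h n) (h (n + 1))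

variable (h2 : ∀ n (y : groupCohomology (Rep.trivial k S k) (n + 1)), 2 • y = 0)
include hS h2

theorem two_nsmul_eq_zero (n : ℕ) (x : groupCohomology (Rep.trivial k G k) (n + 1)) :
    2 • x = 0 := by
  have : S.FiniteIndex := ⟨by omega⟩
  rw [← hS] at h2 ⊢
  exact index_nsmul_eq_zero hr (h2 n) x

theorem inducedMap_transfer_succ [S.FiniteIndex] (n : ℕ) :
    inducedMap (transfer k S) (n + 1) = 0 := by
  refine LinearMap.ext fun y => ?_
  obtain ⟨x, rfl⟩ := inducedMap_constants_surjective hr y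
  rw [inducedMap_transfer_constants, hS, two_nsmul_eq_zero hS hr h2, LinearMap.zero_apply]

theorem card_signRep_add_two (n : ℕ) :
    Nat.card (groupCohomology (signRep k hS) (n + 2)) =
      Nat.card (groupCohomology (Rep.trivial k G k) (n + 1)) *
        Nat.card (groupCohomology (Rep.trivial k S k) (n + 2)) := by
  obtain ⟨t, ht⟩ := exists_notMem_of_index_two hS
  have : S.FiniteIndex := ⟨by omega⟩
  rw [← card_coindTrivial]
  exact card_X₁_succ (shortExact_signToCoind_transfer hS ht)
    (inducedMap_transfer_succ hS hr h2 n) (inducedMap_transfer_succ hS hr h2 (n + 1))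

omit h2 in
theorem map_range_inducedMap_transfer_zero [S.FiniteIndex] :
    (inducedMap (transfer k S) 0).range.map
      (H0IsoOfIsTrivial (Rep.trivial k G k)).toLinearEquiv.toLinearMap = Ideal.span {(2 : k)} := by
  let e := (H0IsoOfIsTrivial (Rep.trivial k G k)).toLinearEquiv
  have h (x) : e (inducedMap (transfer k S) 0 (inducedMap (constants k S) 0 x)) = e x * 2 := by
    rw [inducedMap_transfer_constants, hS, map_nsmul, two_nsmul, mul_two]
  refine le_antisymm ?_ ?_
  · rintro _ ⟨_, ⟨y, rfl⟩, rfl⟩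
    obtain ⟨x, rfl⟩ := inducedMap_constants_surjective hr y
    exact Ideal.mem_span_singleton'.2 ⟨e x, (h x).symm⟩
  · refine (Ideal.span_singleton_le_iff_mem _).2
      ⟨_, ⟨inducedMap (constants k S) 0 (e.symm 1), rfl⟩, (h _).trans ?_⟩
    rw [e.apply_symm_apply, one_mul]

theorem card_H1_signRep :
    Nat.card (groupCohomology (signRep k hS) 1) = Nat.card (k ⧸ Ideal.span {(2 : k)}) *
        Nat.card (groupCohomology (Rep.trivial k S k) 1) := by
  obtain ⟨t, ht⟩ := exists_notMem_of_index_two hS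
  have : S.FiniteIndex := ⟨by omega⟩
  have hX := shortExact_signToCoind_transfer (k := k) hS ht
  let d := (δ hX 0 1 rfl).hom
  have hcoker : Nat.card d.range = Nat.card (k ⧸ Ideal.span {(2 : k)}) := by
    rw [← Nat.card_congr d.quotKerEquivRange.toEquiv, (exact_inducedMap_δ hX 0).linearMap_ker_eq]
    exact Nat.card_congr (Submodule.Quotient.equiv _ _ _
      (map_range_inducedMap_transfer_zero hS hr)).toEquiv
  rw [← card_ker_mul_card_range (inducedMap (signToCoind k hS) 1),
    (exact_δ_inducedMap hX 0).linearMap_ker_eq, hcoker, ← card_coindTrivial,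
    card_range_of_surjective]
  exact (LinearMap.surjective_iff_eq_zero_of_exact (exact_inducedMap hX 1)).2
    (inducedMap_transfer_succ hS hr h2 0)

end IndexTwoCard

section SmallGroups

variable (k : Type u) {G V : Type u} [CommRing k] [Group G] [Group V]

instance finite_groupCohomology_zero : Module.Finite k (groupCohomology (Rep.trivial k G k) 0) :=
  Module.Finite.equiv (M := k) (H0IsoOfIsTrivial (Rep.trivial k G k)).toLinearEquiv.symm

theorem subsingleton_groupCohomology_succ [Subsingleton G] (n : ℕ) :
    Subsingleton (groupCohomology (Rep.trivial k G k) (n + 1)) :=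
  ModuleCat.subsingleton_of_isZero (isZero_groupCohomology_succ_of_subsingleton _ n)

theorem card_groupCohomology_succ_of_subsingleton [Subsingleton G] (n : ℕ) :
    Nat.card (groupCohomology (Rep.trivial k G k) (n + 1)) = 1 :=
  have := subsingleton_groupCohomology_succ k (G := G) n
  Nat.card_unique

instance finite_groupCohomology_of_subsingleton [Subsingleton G] :
    ∀ n, Module.Finite k (groupCohomology (Rep.trivial k G k) n)
  | 0 => inferInstance
  | n + 1 => have := subsingleton_groupCohomology_succ k (G := G) n; inferInstance

variable {k}

section OrderTwo

variable (hG : (⊥ : Subgroup G).index = 2)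

include hG in
theorem two_nsmul_eq_zero_of_index_bot (n : ℕ)
    (x : groupCohomology (Rep.trivial k G k) (n + 1)) : 2 • x = 0 :=
  two_nsmul_eq_zero hG (r := 1) (Subsingleton.elim _ _)
    (fun n _ => (subsingleton_groupCohomology_succ k n).elim ..) n x

theorem card_trivial_succ_of_index_bot (n : ℕ) :
    Nat.card (groupCohomology (Rep.trivial k G k) (n + 1)) =
      Nat.card (groupCohomology (signRep k hG) n) := by
  rw [card_trivial_succ hG (r := 1) (Subsingleton.elim _ _),
    card_groupCohomology_succ_of_subsingleton, mul_one]

variable (h2 : (2 : k) ∈ nonZeroDivisors k) (hk : Nat.card (k ⧸ Ideal.span {(2 : k)}) = 2)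
include h2 hk

theorem card_signRep_of_index_bot (i : ℕ) :
    Nat.card (groupCohomology (signRep k hG) (2 * i)) = 1 ∧
      Nat.card (groupCohomology (signRep k hG) (2 * i + 1)) = 2 := by
  have hbot (n : ℕ) (y : groupCohomology (Rep.trivial k (⊥ : Subgroup G) k) (n + 1)) : 2 • y = 0 :=
    (subsingleton_groupCohomology_succ k n).elim ..
  have hr : (1 : G →* (⊥ : Subgroup G)).comp (⊥ : Subgroup G).subtype = MonoidHom.id _ :=
    Subsingleton.elim _ _
  have hstep (n : ℕ) : Nat.card (groupCohomology (signRep k hG) (n + 2)) =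
      Nat.card (groupCohomology (signRep k hG) n) := by
    rw [card_signRep_add_two hG hr hbot,
      card_groupCohomology_succ_of_subsingleton k (G := (⊥ : Subgroup G)), mul_one,
      card_trivial_succ_of_index_bot hG]
  induction i with
  | zero =>
    have := ModuleCat.subsingleton_of_isZero (isZero_H0_signRep hG h2)
    refine ⟨Nat.card_unique, ?_⟩
    rw [card_H1_signRep hG hr hbot, hk, card_groupCohomology_succ_of_subsingleton, mul_one]
  | succ i ih => exact ⟨(hstep (2 * i)).trans ih.1, (hstep (2 * i + 1)).trans ih.2⟩

include hG

theorem card_trivial_of_index_bot (i : ℕ) :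
    Nat.card (groupCohomology (Rep.trivial k G k) (2 * i + 1)) = 1 ∧
      Nat.card (groupCohomology (Rep.trivial k G k) (2 * i + 2)) = 2 := by
  rw [card_trivial_succ_of_index_bot hG, card_trivial_succ_of_index_bot hG]
  exact card_signRep_of_index_bot hG h2 hk i

theorem finite_groupCohomology_of_index_bot (n : ℕ) :
    Module.Finite k (groupCohomology (Rep.trivial k G k) n) := by
  obtain _ | n := n
  · infer_instance
  · have : Finite (groupCohomology (Rep.trivial k G k) (n + 1)) := by
      obtain ⟨i, rfl | rfl⟩ := n.even_or_odd'
      · exact Nat.finite_of_card_ne_zero (by simp [card_trivial_of_index_bot hG h2 hk])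
      · exact Nat.finite_of_card_ne_zero (by simp [card_trivial_of_index_bot hG h2 hk])
    infer_instance

end OrderTwo

section KleinFour

open scoped IsKleinFour

variable [IsKleinFour V]

theorem card_zpowers_of_ne_one {a : V} (ha : a ≠ 1) : Nat.card (Subgroup.zpowers a) = 2 := by
  rw [Nat.card_zpowers, orderOf_eq_prime (pow_two a ▸ IsKleinFour.mul_self a) ha]

theorem index_zpowers_of_ne_one {a : V} (ha : a ≠ 1) : (Subgroup.zpowers a).index = 2 := by
  have h := (Subgroup.zpowers a).card_mul_index
  rw [card_zpowers_of_ne_one ha, IsKleinFour.card_four] at h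
  omega

variable (V) in
theorem exists_retraction : ∃ (S : Subgroup V) (r : V →* S), Nat.card S = 2 ∧ S.index = 2 ∧
    r.comp S.subtype = MonoidHom.id S := by
  have : Nontrivial V :=
    Finite.one_lt_card_iff_nontrivial.1 (by simp [IsKleinFour.card_four])
  obtain ⟨b, hb⟩ := exists_ne (1 : V)
  obtain ⟨a, ha⟩ := exists_notMem_of_index_two (index_zpowers_of_ne_one hb)
  have ha1 : a ≠ 1 := fun h => ha (h ▸ one_mem _)
  have hb2 := index_zpowers_of_ne_one hb
  have ha' : (⟨a, Subgroup.mem_zpowers a⟩ * ⟨a, Subgroup.mem_zpowers a⟩ : Subgroup.zpowers a) = 1 :=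
    Subtype.ext (IsKleinFour.mul_self a)
  refine ⟨Subgroup.zpowers a, indexTwoHom hb2 ha', card_zpowers_of_ne_one ha1,
    index_zpowers_of_ne_one ha1, MonoidHom.ext fun ⟨_, n, h⟩ => ?_⟩
  subst h
  exact (map_zpow (indexTwoHom hb2 ha') a n).trans
    (congrArg (· ^ n) (indexTwoHom_of_notMem hb2 ha' ha))

variable (h2 : (2 : k) ∈ nonZeroDivisors k) (hk : Nat.card (k ⧸ Ideal.span {(2 : k)}) = 2)
include h2 hk

theorem two_nsmul_eq_zero_of_isKleinFour (n : ℕ)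
    (x : groupCohomology (Rep.trivial k V k) (n + 1)) : 2 • x = 0 := by
  obtain ⟨S, r, hcard, hS, hr⟩ := exists_retraction V
  have hbot := Subgroup.index_bot.trans hcard
  have := finite_groupCohomology_of_index_bot hbot h2 hk
  exact two_nsmul_eq_zero hS hr (two_nsmul_eq_zero_of_index_bot hbot) n x

theorem card_trivial_of_isKleinFour (i : ℕ) :
    Nat.card (groupCohomology (Rep.trivial k V k) (2 * i + 1)) = 2 ^ i ∧
      Nat.card (groupCohomology (Rep.trivial k V k) (2 * i + 2)) = 2 ^ (i + 2) := by
  obtain ⟨S, r, hcard, hS, hr⟩ := exists_retraction V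
  have hbot := Subgroup.index_bot.trans hcard
  have := finite_groupCohomology_of_index_bot hbot h2 hk
  have hS2 := two_nsmul_eq_zero_of_index_bot (k := k) hbot
  have hcS := card_trivial_of_index_bot hbot h2 hk
  have hstep (n : ℕ) : Nat.card (groupCohomology (Rep.trivial k V k) (n + 3)) =
      Nat.card (groupCohomology (Rep.trivial k V k) (n + 1)) *
        (Nat.card (groupCohomology (Rep.trivial k S k) (n + 2)) *
          Nat.card (groupCohomology (Rep.trivial k S k) (n + 3))) := by
    rw [card_trivial_succ hS hr, card_signRep_add_two hS hr hS2, mul_assoc]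
  induction i with
  | zero =>
    have := ModuleCat.subsingleton_of_isZero (isZero_H0_signRep hS h2)
    constructor
    · rw [card_trivial_succ hS hr, (hcS 0).1, mul_one, pow_zero]
      exact Nat.card_unique
    · rw [card_trivial_succ hS hr, card_H1_signRep hS hr hS2, (hcS 0).1, (hcS 0).2, hk]
      rfl
  | succ i ih =>
    have h3 : Nat.card (groupCohomology (Rep.trivial k S k) (2 * i + 3)) = 1 := (hcS (i + 1)).1
    have h4 : Nat.card (groupCohomology (Rep.trivial k S k) (2 * i + 4)) = 2 := (hcS (i + 1)).2
    constructor
    · refine (hstep (2 * i)).trans ?_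
      rw [ih.1, (hcS i).2, h3, mul_one, pow_succ]
    · refine (hstep (2 * i + 1)).trans ?_
      rw [ih.2, h3, h4, one_mul, ← pow_succ]

end KleinFour

end SmallGroups

noncomputable section NormalSubgroup

variable (k : Type u) {G : Type u} [CommRing k] [Group G] (S : Subgroup G) [S.Normal]

/-- The action of `G ⧸ S` on the functions `f : S \ G → k` by left translation,
`(g • f) x = f (g⁻¹ * x)`; it commutes with the action of `G` by right translation. -/
def leftTranslation : G ⧸ S →* End (coindTrivial k S) :=
  QuotientGroup.lift S
    { toFun g := Rep.ofHom
        { toFun f := ⟨fun x => f.1 (g⁻¹ * x), fun s x => by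
            have h := coindTrivial_mul_left f
              (Subgroup.Normal.conj_mem' inferInstance s.1 s.2 g) (g⁻¹ * x)
            simpa [mul_assoc] using h⟩
          map_add' f f' := rfl
          map_smul' a f := rfl
          isIntertwining' h := LinearMap.ext fun f => Subtype.ext <| funext fun x =>
            congrArg f.1 (mul_assoc g⁻¹ x h) }
      map_one' := Rep.hom_ext <| DFunLike.ext _ _ fun f => Subtype.ext <| funext fun x =>
        congrArg f.1 (by group)
      map_mul' g h := Rep.hom_ext <| DFunLike.ext _ _ fun f => Subtype.ext <| funext fun x =>
        congrArg f.1 (by group) }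
    fun s hs => Rep.hom_ext <| DFunLike.ext _ _ fun f => Subtype.ext <| funext fun x =>
      coindTrivial_mul_left f (inv_mem hs) x

variable {k S}

theorem constants_comp_leftTranslation (q : G ⧸ S) :
    constants k S ≫ leftTranslation k S q = constants k S := by
  induction q using QuotientGroup.induction_on with
  | H g => rfl

variable [S.FiniteIndex]

attribute [local instance] Subgroup.fintypeQuotientOfFiniteIndex

theorem sum_leftTranslation_apply (f : coindTrivial k S) (x : G) :
    ((∑ q : G ⧸ S, leftTranslation k S q).hom f).1 x = ∑ q : G ⧸ S, f.1 (q.out⁻¹ * x) := by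
  let evalAt : (coindTrivial k S ⟶ coindTrivial k S) →+ k :=
    { toFun φ := (φ.hom f).1 x
      map_zero' := rfl
      map_add' _ _ := rfl }
  refine (map_sum evalAt _ _).trans (Fintype.sum_congr _ _ fun q => ?_)
  conv_lhs => rw [← q.out_eq']
  rfl

theorem transfer_comp_constants :
    transfer k S ≫ constants k S = ∑ q : G ⧸ S, leftTranslation k S q := by
  refine Rep.hom_ext (DFunLike.ext _ _ fun f => Subtype.ext (funext fun x => ?_))
  rw [sum_leftTranslation_apply]
  refine (Representation.IntertwiningMap.isIntertwining _ _ (transfer k S).hom x f).symm.trans ?_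
  exact Fintype.sum_equiv (.refl _) _ _ fun q => rfl

variable (k S) in
/-- The action of `G ⧸ S` on `Hⁿ(G, coind k)` induced by left translation. -/
def cohomologyAction (n : ℕ) :
    Representation k (G ⧸ S) (groupCohomology (coindTrivial k S) n) where
  toFun q := inducedMap (leftTranslation k S q) n
  map_one' := by
    rw [map_one]
    exact inducedMap_id n
  map_mul' q q' := by
    rw [map_mul]
    exact inducedMap_comp ..

variable (hS : IsUnit (S.index : k)) (n : ℕ)
include hS

theorem invariants_cohomologyAction :
    (cohomologyAction k S n).invariants = (inducedMap (constants k S) n).range := by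
  ext y
  constructor
  · intro hy
    have h : inducedMap (constants k S) n (inducedMap (transfer k S) n y) = (S.index : k) • y := by
      rw [← LinearMap.comp_apply, ← inducedMap_comp, transfer_comp_constants, inducedMap_sum,
        LinearMap.sum_apply, Nat.cast_smul_eq_nsmul, Subgroup.index, Nat.card_eq_fintype_card]
      exact (Fintype.sum_congr _ _ hy).trans (Finset.sum_const y)
    rw [← Submodule.smul_mem_iff_of_isUnit _ hS, ← h]
    exact LinearMap.mem_range_self ..
  · rintro ⟨x, rfl⟩ q
    refine (LinearMap.comp_apply ..).symm.trans ?_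
    exact congr($((inducedMap_comp ..).symm.trans
      (congrArg (inducedMap · n) (constants_comp_leftTranslation q))) x)

theorem card_trivial_modEq {p : ℕ} [Fact p.Prime] (hp : IsPGroup p (G ⧸ S))
    [Finite (groupCohomology (Rep.trivial k S k) n)] :
    Nat.card (groupCohomology (Rep.trivial k S k) n) ≡
      Nat.card (groupCohomology (Rep.trivial k G k) n) [MOD p] := by
  let : MulAction (G ⧸ S) (groupCohomology (coindTrivial k S) n) :=
    MulAction.compHom _ (cohomologyAction k S n)
  have : Finite (groupCohomology (coindTrivial k S) n) :=
    .of_equiv _ (coindIso (S := S) _ n).toLinearEquiv.toEquiv.symm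
  have h := hp.card_modEq_card_fixedPoints (groupCohomology (coindTrivial k S) n)
  rwa [card_coindTrivial, show MulAction.fixedPoints _ _ = _ from
    congrArg SetLike.coe (invariants_cohomologyAction hS n), SetLike.coe_sort_coe,
    card_range_of_injective (inducedMap_constants_injective hS n)] at h

end NormalSubgroup

noncomputable section Tetrahedron

/-- The rotation `(1 2 3)` of the tetrahedron about its vertex `0`. -/
def rot : A4 := ⟨Equiv.swap 1 2 * Equiv.swap 2 3, Equiv.Perm.mem_alternatingGroup.2 (by decide)⟩

/-- The half-turn `(0 1) (2 3)` of the tetrahedron, which reverses the edge joining `0` and `1`. -/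
def flip : A4 := ⟨Equiv.swap 0 1 * Equiv.swap 2 3, Equiv.Perm.mem_alternatingGroup.2 (by decide)⟩

/-- The stabilizer of the vertex `0`. -/
abbrev vertexStab : Subgroup A4 := MulAction.stabilizer A4 (0 : Fin 4)

/-- The stabilizer of the edge joining `0` and `1`. -/
abbrev edgeStab : Subgroup A4 := Subgroup.zpowers flip

/-- The stabilizer of the face with vertices `0`, `1`, `2`. -/
abbrev faceStab : Subgroup A4 := MulAction.stabilizer A4 (3 : Fin 4)

theorem flip_mul_flip : flip * flip = 1 := by decide

theorem flip_mul_flip_mul (x : A4) : flip * (flip * x) = x := by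
  rw [← mul_assoc, flip_mul_flip, one_mul]

theorem rot_mem_vertexStab : rot ∈ vertexStab := by decide

theorem rot_mul_flip_mem_faceStab : rot * flip ∈ faceStab := by decide

theorem rot_mul_flip_mul_rot_mul_flip : rot * flip * (rot * flip) = flip * rot⁻¹ := by
  decide +kernel

theorem card_vertexStab : Nat.card vertexStab = 3 := by
  rw [Nat.card_eq_fintype_card]
  decide +kernel

theorem card_faceStab : Nat.card faceStab = 3 := by
  rw [Nat.card_eq_fintype_card]
  decide +kernel

theorem card_A4 : Nat.card A4 = 12 :=
  alternatingGroup.card_of_card_eq_four (Nat.card_fin 4)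

theorem index_faceStab : faceStab.index = 4 := by
  have h := faceStab.card_mul_index
  rw [card_faceStab, card_A4] at h
  omega

theorem index_bot_edgeStab : (⊥ : Subgroup edgeStab).index = 2 := by
  rw [Subgroup.index_bot, Nat.card_zpowers,
    orderOf_eq_prime ((pow_two flip).trans flip_mul_flip) (by decide)]

theorem flip_notMem_bot :
    (⟨flip, Subgroup.mem_zpowers flip⟩ : edgeStab) ∉ (⊥ : Subgroup edgeStab) :=
  fun h => absurd congr(($(Subgroup.mem_bot.1 h)).1) (by decide)

theorem bijective_faceStab : Function.Bijective
    ![(1 : faceStab), ⟨rot * flip, rot_mul_flip_mem_faceStab⟩,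
      ⟨rot * flip, rot_mul_flip_mem_faceStab⟩ ^ 2] := by
  decide +kernel

theorem bijective_faces : Function.Bijective fun i =>
    (((![1, rot, rot⁻¹, flip * rot * flip] i)⁻¹ : A4) : A4 ⧸ faceStab) :=
  bijective_mk_inv_of_bijective_inv_smul (by decide +kernel)

theorem eq_one_of_mem_vertexStab : ∀ a ∈ vertexStab, a • (1 : Fin 4) = 1 → a = 1 := by
  decide +kernel

theorem exists_mem_vertexStab : ∀ x : A4, ∃ a ∈ vertexStab,
    x = a ∨ x = flip * a ∨ x = rot * flip * a ∨ x = flip * (rot * flip * a) := by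
  decide +kernel

theorem eq_flip_of_notMem_bot {s : edgeStab} (hs : s ∉ (⊥ : Subgroup edgeStab)) : s.1 = flip := by
  have h := (Subgroup.mul_mem_iff_of_index_two index_bot_edgeStab (a := s)
    (b := ⟨flip, Subgroup.mem_zpowers flip⟩)).2 (iff_of_false hs flip_notMem_bot)
  exact (eq_inv_of_mul_eq_one_left congr(($h).1)).trans (inv_eq_of_mul_eq_one_left flip_mul_flip)

variable (k : Type) [CommRing k]

/-- The alternating functions on the oriented edges of the tetrahedron, as functions on `A4`: the
element `x` corresponds to the edge from `x⁻¹ • 0` to `x⁻¹ • 1`. -/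
abbrev edgeModule : Rep k A4 := Rep.coind edgeStab.subtype (signRep k index_bot_edgeStab)

variable {k} in
theorem edgeModule_flip_mul (m : edgeModule k) (x : A4) : m.1 (flip * x) = -m.1 x :=
  (m.2 ⟨flip, Subgroup.mem_zpowers flip⟩ x).trans
    (signRep_ρ_of_notMem index_bot_edgeStab flip_notMem_bot _)

/-- The alternating function on the edges obtained from a function `q` on `A4`, as the value of `q`
at the reversed edge minus its value at the edge. -/
def edgeDifference : (A4 → k) →ₗ[k] edgeModule k where
  toFun q := ⟨fun x => q (flip * x) - q x, fun s x => by
    by_cases hs : s ∈ (⊥ : Subgroup edgeStab)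
    · rw [signRep_ρ_of_mem _ hs, Subgroup.mem_bot.1 hs]
      simp
    · rw [signRep_ρ_of_notMem _ hs]
      simp [eq_flip_of_notMem_bot hs, flip_mul_flip_mul]⟩
  map_add' q q' := Subtype.ext (funext fun x => add_sub_add_comm ..)
  map_smul' a q := Subtype.ext (funext fun x => (mul_sub ..).symm)

/-- The coboundary from functions on the vertices to alternating functions on the oriented edges. -/
def vertexToEdge : coindTrivial k vertexStab ⟶ edgeModule k :=
  Rep.ofHom
    { toLinearMap := edgeDifference k ∘ₗ Submodule.subtype _
      isIntertwining' g := by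
        refine LinearMap.ext fun f => Subtype.ext <| funext fun x => ?_
        exact congrArg (f.1 · - f.1 (x * g)) (mul_assoc _ _ _) }

/-- The sum of an alternating function on the oriented edges around the boundary of each face. -/
def edgeToFace : edgeModule k ⟶ coindTrivial k faceStab :=
  Rep.ofHom
    { toLinearMap := orbitSum k faceStab ∘ₗ Submodule.subtype _
      isIntertwining' g := by
        refine LinearMap.ext fun m => Subtype.ext <| funext fun x => ?_
        exact Finset.sum_congr rfl fun s _ => congrArg m.1 (mul_assoc _ _ _) }

variable {k}

theorem vertexToEdge_apply (f : coindTrivial k vertexStab) (x : A4) :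
    ((vertexToEdge k).hom f).1 x = f.1 (flip * x) - f.1 x := rfl

theorem edgeToFace_apply (m : edgeModule k) (x : A4) :
    ((edgeToFace k).hom m).1 x = m.1 x + m.1 (rot * flip * x) - m.1 (rot⁻¹ * x) := by
  refine (orbitSum_apply bijective_faceStab m.1 x).trans ?_
  rw [sub_eq_add_neg, ← edgeModule_flip_mul, ← mul_assoc, ← rot_mul_flip_mul_rot_mul_flip]
  simp [Fin.sum_univ_three, pow_two]

theorem edgeToFace_apply_flip_rot_flip (m : edgeModule k) :
    ((edgeToFace k).hom m).1 (flip * rot * flip) =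
      -(m.1 (rot * flip) + m.1 (rot * flip * rot) + m.1 (rot * flip * rot⁻¹)) := by
  have h₁ : rot * flip * (flip * rot * flip) = flip * (rot * flip * rot) := by decide +kernel
  have h₂ : rot⁻¹ * (flip * rot * flip) = rot * flip * rot⁻¹ := by decide +kernel
  rw [edgeToFace_apply, h₁, h₂, mul_assoc flip, edgeModule_flip_mul, edgeModule_flip_mul]
  ring

theorem transfer_faceStab (p : coindTrivial k faceStab) : (transfer k faceStab).hom p =
    p.1 1 + p.1 rot + p.1 rot⁻¹ + p.1 (flip * rot * flip) :=
  (transfer_apply bijective_faces p).trans (Fin.sum_univ_four _)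

theorem constants_comp_vertexToEdge : constants k vertexStab ≫ vertexToEdge k = 0 :=
  Rep.hom_ext <| DFunLike.ext _ _ fun a => Subtype.ext <| funext fun _ => sub_self a

theorem vertexToEdge_comp_edgeToFace : vertexToEdge k ≫ edgeToFace k = 0 := by
  refine Rep.hom_ext (DFunLike.ext _ _ fun f => Subtype.ext (funext fun x => ?_))
  refine (edgeToFace_apply ((vertexToEdge k).hom f) x).trans ?_
  have h₁ : f.1 (flip * (rot * flip * x)) = f.1 (flip * (rot⁻¹ * x)) := by
    rw [← coindTrivial_mul_left f rot_mem_vertexStab]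
    simp only [← mul_assoc, ← rot_mul_flip_mul_rot_mul_flip]
  have h₂ : f.1 (rot * flip * x) = f.1 (flip * x) := by
    rw [mul_assoc, coindTrivial_mul_left f rot_mem_vertexStab]
  rw [vertexToEdge_apply, vertexToEdge_apply, vertexToEdge_apply, h₁, h₂,
    coindTrivial_mul_left f (inv_mem rot_mem_vertexStab)]
  change _ = (0 : k)
  ring

theorem edgeToFace_comp_transfer : edgeToFace k ≫ transfer k faceStab = 0 := by
  refine Rep.hom_ext (DFunLike.ext _ _ fun m => ?_)
  refine (transfer_faceStab ((edgeToFace k).hom m)).trans ?_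
  have h : rot⁻¹ * rot⁻¹ = rot := by decide +kernel
  rw [edgeToFace_apply_flip_rot_flip, edgeToFace_apply, edgeToFace_apply, edgeToFace_apply, h,
    inv_mul_cancel, mul_one, mul_one]
  change _ = (0 : k)
  ring

theorem exact_constants_vertexToEdge :
    (ShortComplex.mk _ _ (constants_comp_vertexToEdge (k := k))).Exact := by
  refine exact_of_ker_le_range _ fun f hf => ⟨f.1 1, Subtype.ext (funext fun x => ?_)⟩
  have hflip (y : A4) : f.1 (flip * y) = f.1 y := sub_eq_zero.1 congr(($hf).1 y)
  have hstab {a : A4} (ha : a ∈ vertexStab) : f.1 a = f.1 1 := by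
    simpa using coindTrivial_mul_left f ha 1
  obtain ⟨a, ha, rfl | rfl | rfl | rfl⟩ := exists_mem_vertexStab x <;>
  simp only [hflip, mul_assoc, coindTrivial_mul_left f rot_mem_vertexStab, hstab ha] <;> rfl

theorem exists_coindTrivial_flip_mul (m : edgeModule k) : ∃ f : coindTrivial k vertexStab,
    ∀ a ∈ vertexStab, f.1 a = 0 ∧ f.1 (flip * a) = m.1 a := by
  let q (x : A4) : k := if x • (0 : Fin 4) = 1 then -m.1 x else 0
  refine ⟨orbitSum k vertexStab q, fun a ha => ⟨?_, ?_⟩⟩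
  · exact Finset.sum_eq_zero fun s _ => if_neg (by
      rw [mul_smul, MulAction.mem_stabilizer_iff.1 ha, MulAction.mem_stabilizer_iff.1 s.2]; decide)
  · have h1 : (flip * a) • (0 : Fin 4) = 1 := by
      rw [mul_smul, MulAction.mem_stabilizer_iff.1 ha]; decide
    refine (orbitSum_eq_single q fun s hs hs1 => if_neg fun h => hs1 ?_).trans
      ((if_pos h1).trans ?_)
    · rw [mul_smul, h1] at h
      exact eq_one_of_mem_vertexStab s hs h
    · rw [edgeModule_flip_mul, neg_neg]

theorem exact_vertexToEdge_edgeToFace :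
    (ShortComplex.mk _ _ (vertexToEdge_comp_edgeToFace (k := k))).Exact := by
  refine exact_of_ker_le_range _ fun m hm => ?_
  -- Integrating `m` along the edges that start at the vertex `0` gives the primitive `f`.
  obtain ⟨f, hf⟩ := exists_coindTrivial_flip_mul m
  have h_vertex {a : A4} (ha : a ∈ vertexStab) : m.1 a = f.1 (flip * a) - f.1 a := by
    rw [(hf a ha).1, (hf a ha).2, sub_zero]
  have h_face {a : A4} (ha : a ∈ vertexStab) :
      m.1 (rot * flip * a) = f.1 (flip * (rot * flip * a)) - f.1 (rot * flip * a) := by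
    have h₁ : f.1 (flip * (rot * flip * a)) = m.1 (rot⁻¹ * a) := by
      rw [← (hf _ (mul_mem (inv_mem rot_mem_vertexStab) ha)).2,
        ← mul_assoc flip rot⁻¹, ← rot_mul_flip_mul_rot_mul_flip,
        ← coindTrivial_mul_left f rot_mem_vertexStab (flip * _)]
      simp only [mul_assoc]
    have h₂ : f.1 (rot * flip * a) = m.1 a := by
      rw [mul_assoc, coindTrivial_mul_left f rot_mem_vertexStab, (hf a ha).2]
    have h₃ : m.1 a + m.1 (rot * flip * a) - m.1 (rot⁻¹ * a) = 0 :=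
      (edgeToFace_apply m a).symm.trans congr(($hm).1 a)
    rw [h₁, h₂]
    linear_combination h₃
  have h_flip {x : A4} (hx : m.1 x = f.1 (flip * x) - f.1 x) :
      m.1 (flip * x) = f.1 (flip * (flip * x)) - f.1 (flip * x) := by
    rw [edgeModule_flip_mul, flip_mul_flip_mul, hx, neg_sub]
  refine ⟨f, Subtype.ext (funext fun x => Eq.symm ?_)⟩
  obtain ⟨a, ha, rfl | rfl | rfl | rfl⟩ := exists_mem_vertexStab x
  exacts [h_vertex ha, h_flip (h_vertex ha), h_face ha, h_flip (h_face ha)]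

theorem exact_edgeToFace_transfer :
    (ShortComplex.mk _ _ (edgeToFace_comp_transfer (k := k))).Exact := by
  refine exact_of_ker_le_range _ fun p hp => ?_
  -- Let `m` vanish on the edges at the vertex `0`: each of the other edges bounds a single face at
  -- `0`, whose value it has to take, and the last face is then right because `p` has sum zero.
  let q (x : A4) : k := if x • (0 : Fin 4) = 2 then -p.1 x else 0
  let m : edgeModule k := edgeDifference k q
  have hm {a : A4} (ha : a ∈ vertexStab) : m.1 a = 0 := by
    have h0 := MulAction.mem_stabilizer_iff.1 ha
    have h₁ : q a = 0 := if_neg (by rw [h0]; decide)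
    have h₂ : q (flip * a) = 0 := if_neg (by rw [mul_smul, h0]; decide)
    change q (flip * a) - q a = 0
    rw [h₁, h₂, sub_self]
  have hm_face {a : A4} (ha : a ∈ vertexStab) : m.1 (rot * flip * a) = p.1 a := by
    have h0 := MulAction.mem_stabilizer_iff.1 ha
    have h₁ : q (rot * flip * a) = -p.1 a :=
      (if_pos (by rw [mul_smul, h0]; decide)).trans
        (congrArg _ (coindTrivial_mul_left p rot_mul_flip_mem_faceStab a))
    have h₂ : q (flip * (rot * flip * a)) = 0 := if_neg (by rw [mul_smul, mul_smul, h0]; decide)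
    change q (flip * (rot * flip * a)) - q (rot * flip * a) = p.1 a
    rw [h₁, h₂, zero_sub, neg_neg]
  have h_face {a : A4} (ha : a ∈ vertexStab) : ((edgeToFace k).hom m).1 a = p.1 a := by
    rw [edgeToFace_apply, hm ha, hm (mul_mem (inv_mem rot_mem_vertexStab) ha), hm_face ha,
      zero_add, sub_zero]
  have h_rot := rot_mem_vertexStab
  refine ⟨m, coindTrivial_ext bijective_faces.2 <| Fin.forall_fin_succ.2 ⟨h_face (one_mem _), ?_⟩⟩
  refine Fin.forall_fin_succ.2 ⟨h_face h_rot, Fin.forall_fin_two.2 ⟨h_face (inv_mem h_rot), ?_⟩⟩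
  refine (edgeToFace_apply_flip_rot_flip m).trans ?_
  have hsum : p.1 1 + p.1 rot + p.1 rot⁻¹ + p.1 (flip * rot * flip) = 0 :=
    (transfer_faceStab p).symm.trans hp
  rw [hm_face h_rot, hm_face (inv_mem h_rot), ← mul_one (rot * flip), hm_face (one_mem _)]
  change _ = p.1 (flip * rot * flip)
  linear_combination -hsum

end Tetrahedron

section Cardinality

instance isKleinFour_kleinFour : IsKleinFour (alternatingGroup.kleinFour (Fin 4)) :=
  alternatingGroup.kleinFour_isKleinFour (Nat.card_fin 4)

instance normal_kleinFour : (alternatingGroup.kleinFour (Fin 4)).Normal :=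
  alternatingGroup.normal_kleinFour (Nat.card_fin 4)

theorem index_kleinFour : (alternatingGroup.kleinFour (Fin 4)).index = 3 := by
  have h := (alternatingGroup.kleinFour (Fin 4)).card_mul_index
  rw [IsKleinFour.card_four, card_A4] at h
  omega

variable {k : Type} [CommRing k]

theorem isZero_vertices (h3 : IsUnit (3 : k)) (n : ℕ) :
    IsZero (groupCohomology (coindTrivial k vertexStab) (n + 1)) :=
  isZero_coindTrivial_succ (by rwa [card_vertexStab, Nat.cast_ofNat]) n

theorem isZero_faces (h3 : IsUnit (3 : k)) (n : ℕ) :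
    IsZero (groupCohomology (coindTrivial k faceStab) (n + 1)) :=
  isZero_coindTrivial_succ (by rwa [card_faceStab, Nat.cast_ofNat]) n

theorem isUnit_index_kleinFour (h3 : IsUnit (3 : k)) :
    IsUnit ((alternatingGroup.kleinFour (Fin 4)).index : k) := by
  rwa [index_kleinFour, Nat.cast_ofNat]

variable (h2 : (2 : k) ∈ nonZeroDivisors k) (hk : Nat.card (k ⧸ Ideal.span {(2 : k)}) = 2)
include h2 hk

theorem card_edgeModule (i : ℕ) : Nat.card (groupCohomology (edgeModule k) (2 * i)) = 1 ∧
    Nat.card (groupCohomology (edgeModule k) (2 * i + 1)) = 2 := by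
  have h (n : ℕ) : Nat.card (groupCohomology (edgeModule k) n) =
      Nat.card (groupCohomology (signRep k index_bot_edgeStab) n) :=
    Nat.card_congr (coindIso _ n).toLinearEquiv.toEquiv
  rw [h, h]
  exact card_signRep_of_index_bot index_bot_edgeStab h2 hk i

theorem isZero_edgeModule (i : ℕ) : IsZero (groupCohomology (edgeModule k) (2 * i)) :=
  ModuleCat.isZero_of_iff_subsingleton.2
    (Nat.card_eq_one_iff_unique.1 (card_edgeModule h2 hk i).1).1

variable (h3 : IsUnit (3 : k))
include h3

theorem two_nsmul_eq_zero_A4 (n : ℕ) (x : groupCohomology (Rep.trivial k A4 k) (n + 1)) :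
    2 • x = 0 :=
  nsmul_eq_zero_of_isUnit_index (isUnit_index_kleinFour h3)
    (two_nsmul_eq_zero_of_isKleinFour h2 hk n) x

theorem card_trivial_A4_dvd (i : ℕ) :
    Nat.card (groupCohomology (Rep.trivial k A4 k) (2 * i + 1)) ∣ 2 ^ i :=
  (card_trivial_dvd (isUnit_index_kleinFour h3) _).trans
    (card_trivial_of_isKleinFour h2 hk i).1.dvd

theorem card_trivial_A4_modEq (i : ℕ) :
    Nat.card (groupCohomology (Rep.trivial k A4 k) (2 * i + 1)) ≡ 2 ^ i [MOD 3] ∧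
      Nat.card (groupCohomology (Rep.trivial k A4 k) (2 * i + 2)) ≡ 2 ^ i [MOD 3] := by
  obtain ⟨hodd, heven⟩ :=
    card_trivial_of_isKleinFour (V := alternatingGroup.kleinFour (Fin 4)) h2 hk i
  have hp : IsPGroup 3 (A4 ⧸ alternatingGroup.kleinFour (Fin 4)) :=
    .of_card (n := 1) index_kleinFour
  have := Nat.finite_of_card_ne_zero (hodd ▸ (NeZero.ne (2 ^ i)))
  have := Nat.finite_of_card_ne_zero (heven ▸ (NeZero.ne (2 ^ (i + 2))))
  have h₁ := card_trivial_modEq (isUnit_index_kleinFour h3) (2 * i + 1) hp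
  have h₂ := card_trivial_modEq (isUnit_index_kleinFour h3) (2 * i + 2) hp
  rw [hodd] at h₁
  rw [heven] at h₂
  refine ⟨h₁.symm, h₂.symm.trans ?_⟩
  rw [pow_add]
  exact (Nat.ModEq.mul_left (2 ^ i) (by decide : 2 ^ 2 ≡ 1 [MOD 3])).trans (by rw [mul_one])

theorem card_trivial_A4_two : Nat.card (groupCohomology (Rep.trivial k A4 k) 2) = 1 := by
  have hF : IsZero (groupCohomology (kernel (transfer k faceStab)) 0) :=
    isZero_H0_of_comp_transfer_eq_zero
      (by
        rw [index_faceStab]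
        exact_mod_cast mul_mem h2 h2)
      (kernel.condition _)
  have hdvd := card_dvd_of_isZero_H0_kernel exact_constants_vertexToEdge
    exact_vertexToEdge_edgeToFace exact_edgeToFace_transfer (isZero_vertices h3) hF
  rw [(card_edgeModule h2 hk 0).2] at hdvd
  refine ((Nat.dvd_prime Nat.prime_two).1 hdvd).resolve_right fun h => ?_
  exact absurd (h ▸ (card_trivial_A4_modEq h2 hk h3 0).2) (by decide)

theorem card_trivial_A4_recurrence (i : ℕ) :
    Nat.card (groupCohomology (Rep.trivial k A4 k) (2 * i + 4)) =
        2 * Nat.card (groupCohomology (Rep.trivial k A4 k) (2 * i + 1)) ∧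
      Nat.card (groupCohomology (Rep.trivial k A4 k) (2 * i + 5)) =
        Nat.card (groupCohomology (Rep.trivial k A4 k) (2 * i + 2)) := by
  obtain h | h := card_of_exact_of_prime_card_middle exact_constants_vertexToEdge
    exact_vertexToEdge_edgeToFace exact_edgeToFace_transfer (isZero_vertices h3)
    (isZero_faces h3) Nat.prime_two (isZero_edgeModule h2 hk (i + 1))
    (card_edgeModule h2 hk (i + 1)).2 (isZero_edgeModule h2 hk (i + 2))
  · exact ⟨h.1, h.2.symm⟩
  · have hmod : 2 ^ i ≡ 2 ^ (i + 1) [MOD 3] :=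
      (card_trivial_A4_modEq h2 hk h3 i).1.symm.trans
        (h.1 ▸ (card_trivial_A4_modEq h2 hk h3 (i + 1)).2)
    have hdvd : 3 ∣ 2 ^ (i + 1) - 2 ^ i := (Nat.modEq_iff_dvd' (by gcongr <;> omega)).1 hmod
    rw [pow_succ, mul_two, Nat.add_sub_cancel] at hdvd
    exact absurd (Nat.prime_three.dvd_of_dvd_pow hdvd) (by decide)

theorem card_trivial_A4_add_six (n : ℕ) :
    Nat.card (groupCohomology (Rep.trivial k A4 k) (n + 7)) =
      2 * Nat.card (groupCohomology (Rep.trivial k A4 k) (n + 1)) := by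
  have hrec := card_trivial_A4_recurrence h2 hk h3
  obtain ⟨i, rfl | rfl⟩ := n.even_or_odd'
  · exact (hrec (i + 1)).2.trans (hrec i).1
  · exact (hrec (i + 2)).1.trans (congrArg (2 * ·) (hrec i).2)

theorem card_trivial_A4_one : Nat.card (groupCohomology (Rep.trivial k A4 k) 1) = 1 :=
  Nat.dvd_one.1 (card_trivial_A4_dvd h2 hk h3 0)

theorem card_trivial_A4_three : Nat.card (groupCohomology (Rep.trivial k A4 k) 3) = 2 :=
  ((Nat.dvd_prime Nat.prime_two).1 (card_trivial_A4_dvd h2 hk h3 1)).resolve_left fun h =>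
    absurd (h ▸ (card_trivial_A4_modEq h2 hk h3 1).1) (by decide)

theorem card_trivial_A4 : ∀ {n : ℕ}, ¬ 6 ∣ n →
    Nat.card (groupCohomology (Rep.trivial k A4 k) n) =
      2 ^ (n / 6 + if n % 6 = 3 ∨ n % 6 = 4 then 1 else 0)
  | 0, h6 => absurd (dvd_zero 6) h6
  | 1, _ => card_trivial_A4_one h2 hk h3
  | 2, _ => card_trivial_A4_two h2 hk h3
  | 3, _ => card_trivial_A4_three h2 hk h3
  | 4, _ => (card_trivial_A4_recurrence h2 hk h3 0).1.trans
      (congrArg (2 * ·) (card_trivial_A4_one h2 hk h3))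
  | 5, _ => (card_trivial_A4_recurrence h2 hk h3 0).2.trans (card_trivial_A4_two h2 hk h3)
  | 6, h6 => absurd (dvd_refl 6) h6
  | n + 7, h6 => by
    rw [card_trivial_A4_add_six h2 hk h3, card_trivial_A4 (n := n + 1) (by omega), ← pow_succ',
      add_right_comm, ← Nat.add_div_right _ (by decide : 0 < 6), ← Nat.add_mod_right (n + 1) 6]

end Cardinality

theorem nonempty_addEquiv_of_two_nsmul_eq_zero {A : Type*} [AddCommGroup A]
    (h2 : ∀ x : A, 2 • x = 0) {d : ℕ} (hA : Nat.card A = 2 ^ d) :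
    Nonempty (A ≃+ (Fin d → ZMod 2)) := by
  let := AddCommGroup.zmodModule h2
  have : Finite A := Nat.finite_of_card_ne_zero (hA ▸ NeZero.ne _)
  have hd : Module.finrank (ZMod 2) A = d := by
    rw [Module.natCard_eq_pow_finrank (K := ZMod 2), Nat.card_zmod] at hA
    exact Nat.pow_right_injective le_rfl hA
  exact ⟨(LinearEquiv.ofFinrankEq _ _ (hd.trans (Module.finrank_fin_fun _).symm)).toAddEquiv⟩

theorem card_padicInt_quotient_span (p : ℕ) [Fact p.Prime] :
    Nat.card (ℤ_[p] ⧸ Ideal.span {(p : ℤ_[p])}) = p := by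
  rw [← PadicInt.maximalIdeal_eq_span_p, ← PadicInt.ker_toZMod, Nat.card_congr
    (RingHom.quotientKerEquivOfSurjective (ZMod.ringHom_surjective PadicInt.toZMod)).toEquiv,
    Nat.card_zmod]

theorem isUnit_natCast_padicInt {p : ℕ} [Fact p.Prime] {n : ℕ} (h : p.Coprime n) :
    IsUnit (n : ℤ_[p]) :=
  PadicInt.isUnit_iff.2 (PadicInt.norm_natCast_eq_one_iff.2 h)

end CohomologyA4

theorem cohomology_A4_trivial_Z2_general {k : Type} [CommRing k]
    (h2 : (2 : k) ∈ nonZeroDivisors k) (hk : Nat.card (k ⧸ Ideal.span {(2 : k)}) = 2)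
    (h3 : IsUnit (3 : k)) {n : ℕ} (h6 : ¬ 6 ∣ n) :
    Nonempty (groupCohomology (Rep.trivial k A4 k) n ≃+
      (Fin (n / 6 + if n % 6 = 3 ∨ n % 6 = 4 then 1 else 0) → ZMod 2)) := by
  obtain ⟨m, rfl⟩ := Nat.exists_eq_succ_of_ne_zero fun h : n = 0 => h6 (h ▸ dvd_zero 6)
  exact CohomologyA4.nonempty_addEquiv_of_two_nsmul_eq_zero
    (CohomologyA4.two_nsmul_eq_zero_A4 h2 hk h3 m)
    (CohomologyA4.card_trivial_A4 h2 hk h3 h6)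

/-- With trivial action of `A₄` on `ℤ₂`, for every `n ≥ 1` not divisible by `6`, the group
cohomology `H^n(A₄, ℤ₂)` is the elementary abelian 2-group `(ℤ/2ℤ)^(⌊n/6⌋ + r)`, where
`r = 1` if `n ≡ 3, 4 (mod 6)` and `r = 0` if `n ≡ 1, 2, 5 (mod 6)`. -/
theorem cohomology_A4_trivial_Z2 (n : ℕ) (hn : 1 ≤ n) (h6 : ¬ (6 ∣ n)) :
    Nonempty (groupCohomology (Rep.trivial ℤ_[2] A4 ℤ_[2]) n ≃+
      (Fin (n / 6 + if n % 6 = 3 ∨ n % 6 = 4 then 1 else 0) → ZMod 2)) :=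
  cohomology_A4_trivial_Z2_general (mem_nonZeroDivisors_of_ne_zero two_ne_zero)
    (CohomologyA4.card_padicInt_quotient_span 2)
    (CohomologyA4.isUnit_natCast_padicInt (by decide : Nat.Coprime 2 3)) h6
end
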